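/- arXiv:1507.06964 — 6 statements merged into one kernel-verified Lean document; each statement's English description precedes it below -/
import Mathlib

section
/- Let n ≥ 1, α > 0, ν > 0, and let v₀ ∈ H¹(ℝⁿ). Let v(t) be the solution of the linear Navier–Stokes–Voigt equation with datum v₀, i.e. v̂(ξ,t) = e^{tM(ξ)} v̂₀(ξ) with M(ξ) = −ν|ξ|²/(1+α²|ξ|²). Suppose that for some r ∈ (−n/2, ∞) one has liminf_{ρ→0⁺} ρ^{−2r−n} ∫_{|ξ|≤ρ} |v̂₀(ξ)|² dξ > 0. Then there exists a constant C > 0 such that for all t > 0, ‖v(t)‖²_{L²} + α²‖∇v(t)‖²_{L²} ≥ C (1+t)^{−(n/2+r)}. -/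
open MeasureTheory Filter Topology Metric

/-!
At time `t` the multiplier `e^{2tM(ξ)}` stays bounded below on the ball of radius `δ (1+t)^{-1/2}`,
because `M(ξ) ≥ -ν|ξ|²`: at low frequencies the equation damps no faster than the heat equation.
The mass of `|v̂₀|²` in that ball is at least of order `(1+t)^{-(n/2+r)}` by the assumption on the
decay indicator, and the remaining frequencies contribute nonnegatively to the energy.
-/

theorem exists_forall_mul_rpow_le_of_eventually {m : ℝ → ℝ} {c s : ℝ}
    (h : ∀ᶠ ρ in 𝓝[>] (0 : ℝ), c ≤ ρ ^ (-s) * m ρ) :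
    ∃ δ > 0, ∀ ρ ∈ Set.Ioc 0 δ, c * ρ ^ s ≤ m ρ := by
  obtain ⟨δ, hδ, hsub⟩ := mem_nhdsGT_iff_exists_Ioc_subset.mp h
  refine ⟨δ, hδ, fun ρ hρ => ?_⟩
  have hc : c ≤ ρ ^ (-s) * m ρ := hsub hρ
  rwa [Real.rpow_neg hρ.1.le, le_inv_mul_iff₀' (Real.rpow_pos_of_pos hρ.1 s)] at hc

theorem div_sqrt_rpow_two_mul {δ x : ℝ} (hδ : 0 ≤ δ) (hx : 0 ≤ x) (β : ℝ) :
    (δ / √x) ^ (2 * β) = δ ^ (2 * β) * x ^ (-β) := by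
  rw [Real.div_rpow hδ (Real.sqrt_nonneg x), ← Real.rpow_div_two_eq_sqrt _ hx,
    mul_div_cancel_left₀ β two_ne_zero, Real.rpow_neg hx, div_eq_mul_inv]

section Multiplier

variable {E : Type*} [SeminormedAddCommGroup E] [MeasurableSpace E] [OpensMeasurableSpace E]
  {μ : Measure E} {w M g : E → ℝ} {κ : ℝ}

theorem exp_mul_setIntegral_closedBall_le_integral {t : ℝ} (hw : ∀ ξ, 1 ≤ w ξ)
    (hκ : 0 ≤ κ) (hM : ∀ ξ, -(κ * ‖ξ‖ ^ 2) ≤ M ξ) (hg : ∀ ξ, 0 ≤ g ξ) (ht : 0 ≤ t)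
    (hint : Integrable (fun ξ => w ξ * (Real.exp (2 * t * M ξ) * g ξ)) μ) (ρ : ℝ) :
    Real.exp (2 * t * -(κ * ρ ^ 2)) * ∫ ξ in closedBall 0 ρ, g ξ ∂μ ≤
      ∫ ξ, w ξ * (Real.exp (2 * t * M ξ) * g ξ) ∂μ := by
  have hpointwise : ∀ ξ ∈ closedBall (0 : E) ρ,
      Real.exp (2 * t * -(κ * ρ ^ 2)) * g ξ ≤ w ξ * (Real.exp (2 * t * M ξ) * g ξ) := by
    intro ξ hξ
    have hnorm : ‖ξ‖ ≤ ρ := mem_closedBall_zero_iff.mp hξ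
    have hsymbol : -(κ * ρ ^ 2) ≤ M ξ := le_trans (by gcongr) (hM ξ)
    calc Real.exp (2 * t * -(κ * ρ ^ 2)) * g ξ
        ≤ Real.exp (2 * t * M ξ) * g ξ := by gcongr; exact hg ξ
      _ ≤ w ξ * (Real.exp (2 * t * M ξ) * g ξ) :=
        le_mul_of_one_le_left (mul_nonneg (Real.exp_nonneg _) (hg ξ)) (hw ξ)
  have hnonneg : ∀ ξ, 0 ≤ w ξ * (Real.exp (2 * t * M ξ) * g ξ) := fun ξ =>
    mul_nonneg (zero_le_one.trans (hw ξ)) (mul_nonneg (Real.exp_nonneg _) (hg ξ))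
  calc Real.exp (2 * t * -(κ * ρ ^ 2)) * ∫ ξ in closedBall 0 ρ, g ξ ∂μ
      = ∫ ξ in closedBall 0 ρ, Real.exp (2 * t * -(κ * ρ ^ 2)) * g ξ ∂μ :=
        (integral_const_mul _ _).symm
    _ ≤ ∫ ξ in closedBall 0 ρ, w ξ * (Real.exp (2 * t * M ξ) * g ξ) ∂μ :=
        integral_mono_of_nonneg
          (Eventually.of_forall fun ξ => mul_nonneg (Real.exp_nonneg _) (hg ξ))
          hint.integrableOn (ae_restrict_of_forall_mem measurableSet_closedBall hpointwise)
    _ ≤ ∫ ξ, w ξ * (Real.exp (2 * t * M ξ) * g ξ) ∂μ :=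
        setIntegral_le_integral hint (Eventually.of_forall hnonneg)

theorem exists_mul_rpow_le_integral_mul_exp {c β : ℝ} (hw : ∀ ξ, 1 ≤ w ξ)
    (hκ : 0 ≤ κ) (hM : ∀ ξ, -(κ * ‖ξ‖ ^ 2) ≤ M ξ) (hg : ∀ ξ, 0 ≤ g ξ)
    (hint : ∀ t ≥ 0, Integrable (fun ξ => w ξ * (Real.exp (2 * t * M ξ) * g ξ)) μ)
    (hc : 0 < c)
    (hliminf : ∀ᶠ ρ in 𝓝[>] (0 : ℝ), c ≤ ρ ^ (-(2 * β)) * ∫ ξ in closedBall 0 ρ, g ξ ∂μ) :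
    ∃ C > 0, ∀ t ≥ 0,
      C * (1 + t) ^ (-β) ≤ ∫ ξ, w ξ * (Real.exp (2 * t * M ξ) * g ξ) ∂μ := by
  obtain ⟨δ, hδ, hmass⟩ := exists_forall_mul_rpow_le_of_eventually hliminf
  refine ⟨Real.exp (2 * -(κ * δ ^ 2)) * (c * δ ^ (2 * β)), by positivity, fun t ht => ?_⟩
  set ρ := δ / √(1 + t) with hρ
  have hρ_mem : ρ ∈ Set.Ioc 0 δ :=
    ⟨by positivity, div_le_self hδ.le (Real.one_le_sqrt.mpr (by linarith))⟩
  have hexponent : 2 * -(κ * δ ^ 2) ≤ 2 * t * -(κ * ρ ^ 2) := by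
    have hscale : t * ρ ^ 2 ≤ δ ^ 2 := by
      rw [hρ, div_pow, Real.sq_sqrt (by positivity), mul_div_assoc', div_le_iff₀ (by positivity)]
      nlinarith [sq_nonneg δ]
    linarith [mul_le_mul_of_nonneg_left hscale hκ]
  calc Real.exp (2 * -(κ * δ ^ 2)) * (c * δ ^ (2 * β)) * (1 + t) ^ (-β)
      = Real.exp (2 * -(κ * δ ^ 2)) * (c * ρ ^ (2 * β)) := by
        rw [hρ, div_sqrt_rpow_two_mul hδ.le (by positivity)]; ring
    _ ≤ Real.exp (2 * t * -(κ * ρ ^ 2)) * ∫ ξ in closedBall 0 ρ, g ξ ∂μ := by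
        gcongr ?_ * ?_
        · exact Real.exp_le_exp.mpr hexponent
        · exact hmass ρ hρ_mem
    _ ≤ ∫ ξ, w ξ * (Real.exp (2 * t * M ξ) * g ξ) ∂μ :=
        exp_mul_setIntegral_closedBall_le_integral hw hκ hM hg ht (hint t ht) ρ

end Multiplier

/-- The symbol `M(ξ) = -ν|ξ|²/(1+α²|ξ|²)` of the linear Navier–Stokes–Voigt equation, on an
arbitrary frequency space; `α = 0` gives the heat symbol. -/
noncomputable def voigtSymbol {E : Type*} [Norm E] (α ν : ℝ) (ξ : E) : ℝ :=
  -(ν * ‖ξ‖ ^ 2) / (1 + α ^ 2 * ‖ξ‖ ^ 2)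

theorem one_le_one_add_sq_mul_sq (α x : ℝ) : 1 ≤ 1 + α ^ 2 * x ^ 2 :=
  le_add_of_nonneg_right (by positivity)

section Symbol

variable {E : Type*} [SeminormedAddCommGroup E]

theorem neg_abs_mul_sq_norm_le_voigtSymbol (α ν : ℝ) (ξ : E) :
    -(|ν| * ‖ξ‖ ^ 2) ≤ voigtSymbol α ν ξ := by
  rw [voigtSymbol, neg_div, neg_le_neg_iff]
  calc ν * ‖ξ‖ ^ 2 / (1 + α ^ 2 * ‖ξ‖ ^ 2)
      ≤ |ν| * ‖ξ‖ ^ 2 / (1 + α ^ 2 * ‖ξ‖ ^ 2) := by gcongr; exact le_abs_self ν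
    _ ≤ |ν| * ‖ξ‖ ^ 2 := div_le_self (by positivity) (one_le_one_add_sq_mul_sq α ‖ξ‖)

theorem bddAbove_range_voigtSymbol {α ν : ℝ} (h : α = 0 → 0 ≤ ν) :
    BddAbove (Set.range (voigtSymbol α ν : E → ℝ)) := by
  rcases eq_or_ne α 0 with rfl | hα
  · have hν : 0 ≤ ν := h rfl
    refine ⟨0, Set.forall_mem_range.mpr fun ξ => ?_⟩
    rw [voigtSymbol, neg_div, neg_nonpos]
    positivity
  · refine ⟨|ν| / α ^ 2, Set.forall_mem_range.mpr fun ξ => ?_⟩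
    rw [voigtSymbol, div_le_div_iff₀ (by positivity) (by positivity)]
    calc -(ν * ‖ξ‖ ^ 2) * α ^ 2 = -ν * (α ^ 2 * ‖ξ‖ ^ 2) := by ring
      _ ≤ |ν| * (1 + α ^ 2 * ‖ξ‖ ^ 2) := by
        gcongr
        · exact neg_le_abs ν
        · exact le_add_of_nonneg_left zero_le_one

variable [MeasurableSpace E] [OpensMeasurableSpace E] {μ : Measure E} {g : E → ℝ}

theorem measurable_voigtSymbol (α ν : ℝ) : Measurable (voigtSymbol α ν : E → ℝ) := by
  unfold voigtSymbol
  fun_prop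

theorem integrable_mul_exp_voigtSymbol {α ν t : ℝ} (hαν : α = 0 → 0 ≤ ν) (ht : 0 ≤ t)
    (hg : Integrable (fun ξ => (1 + α ^ 2 * ‖ξ‖ ^ 2) * g ξ) μ) :
    Integrable (fun ξ =>
      (1 + α ^ 2 * ‖ξ‖ ^ 2) * (Real.exp (2 * t * voigtSymbol α ν ξ) * g ξ)) μ := by
  obtain ⟨B, hB⟩ := bddAbove_range_voigtSymbol (E := E) hαν
  have hbound (ξ : E) : ‖Real.exp (2 * t * voigtSymbol α ν ξ)‖ ≤ Real.exp (2 * t * B) := by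
    rw [Real.norm_of_nonneg (Real.exp_nonneg _)]
    gcongr
    exact hB (Set.mem_range_self ξ)
  have hmeas : Measurable fun ξ : E => Real.exp (2 * t * voigtSymbol α ν ξ) :=
    ((measurable_voigtSymbol α ν).const_mul _).exp
  simpa only [mul_left_comm] using
    hg.bdd_mul hmeas.aestronglyMeasurable (Eventually.of_forall hbound)

theorem integrable_one_add_sq_mul_sq_norm_mul (α : ℝ)
    (hg : Integrable (fun ξ => (1 + ‖ξ‖ ^ 2) * g ξ) μ) :
    Integrable (fun ξ => (1 + α ^ 2 * ‖ξ‖ ^ 2) * g ξ) μ := by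
  have hpos (ξ : E) : 0 < 1 + ‖ξ‖ ^ 2 := by positivity
  have hbound (ξ : E) : ‖(1 + α ^ 2 * ‖ξ‖ ^ 2) / (1 + ‖ξ‖ ^ 2)‖ ≤ 1 + α ^ 2 := by
    rw [Real.norm_of_nonneg (by positivity), div_le_iff₀ (hpos ξ)]
    linarith [sq_nonneg α, sq_nonneg ‖ξ‖]
  have hmeas : Measurable fun ξ : E => (1 + α ^ 2 * ‖ξ‖ ^ 2) / (1 + ‖ξ‖ ^ 2) := by fun_prop
  refine (hg.bdd_mul hmeas.aestronglyMeasurable (Eventually.of_forall hbound)).congr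
    (Eventually.of_forall fun ξ => ?_)
  simp only [← mul_assoc, div_mul_cancel₀ _ (hpos ξ).ne']

theorem linear_NSV_lower_decay_general {V : Type*} [SeminormedAddCommGroup V] {F0 : E → V}
    {α ν β : ℝ} (hαν : α = 0 → 0 ≤ ν)
    (hH1 : Integrable (fun ξ => (1 + α ^ 2 * ‖ξ‖ ^ 2) * ‖F0 ξ‖ ^ 2) μ)
    (hliminf : ∃ c > 0, ∀ᶠ ρ in 𝓝[>] (0 : ℝ),
      c ≤ ρ ^ (-(2 * β)) * ∫ ξ in closedBall 0 ρ, ‖F0 ξ‖ ^ 2 ∂μ) :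
    ∃ C > 0, ∀ t ≥ 0, C * (1 + t) ^ (-β) ≤
      ∫ ξ, (1 + α ^ 2 * ‖ξ‖ ^ 2) * (Real.exp (2 * t * voigtSymbol α ν ξ) * ‖F0 ξ‖ ^ 2) ∂μ := by
  obtain ⟨c, hc, hev⟩ := hliminf
  exact exists_mul_rpow_le_integral_mul_exp (fun ξ => one_le_one_add_sq_mul_sq α ‖ξ‖)
    (abs_nonneg ν) (neg_abs_mul_sq_norm_le_voigtSymbol α ν) (fun ξ => sq_nonneg ‖F0 ξ‖)
    (fun _ ht => integrable_mul_exp_voigtSymbol hαν ht hH1) hc hev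

end Symbol

/-- **Lower decay bound for the linear Navier–Stokes–Voigt equation.**
If the decay indicator of `v₀` at `r` has positive liminf as `ρ → 0⁺`, then the `H¹_α`
energy of the solution `v̂(ξ,t) = e^{tM(ξ)} v̂₀(ξ)`, `M(ξ) = -ν|ξ|²/(1+α²|ξ|²)`, is bounded
below by `C (1+t)^{-(n/2+r)}`.  By Plancherel,
`‖v(t)‖²_{L²} + α²‖∇v(t)‖²_{L²} = ∫ (1+α²|ξ|²) e^{2tM(ξ)} |v̂₀(ξ)|² dξ`. -/
theorem linear_NSV_lower_decay
    (n : ℕ) (hn : 1 ≤ n) (α ν : ℝ) (hα : 0 < α) (hν : 0 < ν)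
    (F0 : EuclideanSpace ℝ (Fin n) → ℂ)
    (hH1 : Integrable (fun ξ : EuclideanSpace ℝ (Fin n) => (1 + ‖ξ‖ ^ 2) * ‖F0 ξ‖ ^ 2))
    (r : ℝ) (hr : -(n : ℝ) / 2 < r)
    (hliminf : ∃ c > (0:ℝ), ∀ᶠ ρ in 𝓝[>] (0:ℝ),
      c ≤ ρ ^ (-(2 * r) - (n : ℝ)) *
        ∫ ξ in closedBall (0 : EuclideanSpace ℝ (Fin n)) ρ, ‖F0 ξ‖ ^ 2) :
    ∃ C > (0:ℝ), ∀ t > (0:ℝ),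
      C * (1 + t) ^ (-((n : ℝ) / 2 + r)) ≤
        ∫ ξ : EuclideanSpace ℝ (Fin n),
          (1 + α ^ 2 * ‖ξ‖ ^ 2) *
            (Real.exp (2 * t * (-(ν * ‖ξ‖ ^ 2) / (1 + α ^ 2 * ‖ξ‖ ^ 2))) * ‖F0 ξ‖ ^ 2) := by
  have hβ : -(2 * r) - (n : ℝ) = -(2 * ((n : ℝ) / 2 + r)) := by ring
  obtain ⟨C, hC, hdecay⟩ := linear_NSV_lower_decay_general (fun _ => hν.le)
    (integrable_one_add_sq_mul_sq_norm_mul α hH1) (hβ ▸ hliminf)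
  exact ⟨C, hC, fun t ht => hdecay t ht.le⟩
end

section
/- Let n ≥ 1 and α, ν > 0 with ν > α². Let v₀ ∈ H¹(ℝⁿ) and let v(t) be the solution of the linear Navier–Stokes–Voigt equation with datum v₀, i.e. v̂(ξ,t) = e^{tM(ξ)} v̂₀(ξ) with M(ξ) = −ν|ξ|²/(1+α²|ξ|²). Suppose that for some r ∈ (−n/2, ∞) one has limsup_{ρ→0⁺} ρ^{−2r−n} ∫_{|ξ|≤ρ} |v̂₀(ξ)|² dξ < ∞. Then there exist constants C₂, C₃ > 0 such that for all t > 0, ‖v(t)‖²_{L²} + α²‖∇v(t)‖²_{L²} ≤ C₂ (C₃+t)^{−(n/2+r)}. -/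
open MeasureTheory Filter Topology Metric

/-!
Give each frequency `ξ` its initial energy `(1 + α²‖ξ‖²) ‖v̂₀(ξ)‖²`. This is a finite measure `κ`,
and the energy at time `t` is the Laplace transform at `2t` of the distribution of the decay rate
`φ = -M` under `κ`. For small `u`, the bound `φ(ξ) < u` forces `‖ξ‖² ≤ 2u/ν` and
`1 + α²‖ξ‖² ≤ 2`, so the hypothesis on `v̂₀` says `κ {φ < u} = O(u ^ s)` as `u → 0`, where
`s = n/2 + r`. Integrating `e ^ (-aφ) = ∫_{u > φ} a e ^ (-au) du` against `κ` and exchanging the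
integrals turns this into the decay `O(a ^ (-s))` of the Laplace transform, the Abelian half of
the Tauberian theorem.
-/

section Abelian

variable {X : Type*} [MeasurableSpace X] {κ : Measure X} {φ : X → ℝ} {a s : ℝ}

lemma lintegral_Ioi_mul_exp_neg_mul (ha : 0 < a) (x : ℝ) :
    ∫⁻ u in Set.Ioi x, ENNReal.ofReal (a * Real.exp (-(a * u)))
      = ENNReal.ofReal (Real.exp (-(a * x))) := by
  have hint : IntegrableOn (fun u : ℝ => a * Real.exp (-a * u)) (Set.Ioi x) :=
    (integrableOn_exp_mul_Ioi (neg_lt_zero.2 ha) x).const_mul a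
  simp only [← neg_mul]
  rw [← ofReal_integral_eq_lintegral_ofReal hint (ae_of_all _ fun u => by positivity),
    integral_const_mul, integral_exp_mul_Ioi (neg_lt_zero.2 ha), neg_div_neg_eq,
    mul_div_cancel₀ _ ha.ne']

lemma lintegral_Ioi_mul_exp_neg_mul_mul_rpow (ha : 0 < a) (hs : -1 < s) :
    ∫⁻ u in Set.Ioi 0, ENNReal.ofReal (a * Real.exp (-(a * u))) * ENNReal.ofReal (u ^ s)
      = ENNReal.ofReal (Real.Gamma (s + 1) * a ^ (-s)) := by
  have hint : IntegrableOn (fun u : ℝ => a * (u ^ s * Real.exp (-(a * u)))) (Set.Ioi 0) := by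
    have h := (integrableOn_rpow_mul_exp_neg_mul_rpow hs one_pos ha).const_mul a
    simp only [Real.rpow_one, neg_mul] at h
    exact h
  have hval : ∫ u in Set.Ioi 0, a * (u ^ s * Real.exp (-(a * u)))
      = Real.Gamma (s + 1) * a ^ (-s) := by
    have hGamma := Real.integral_rpow_mul_exp_neg_mul_Ioi (a := s + 1) (by linarith) ha
    rw [add_sub_cancel_right] at hGamma
    have hpow : a * (1 / a) ^ (s + 1) = a ^ (-s) := by
      rw [one_div, Real.inv_rpow ha.le, Real.rpow_add_one ha.ne', Real.rpow_neg ha.le]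
      field_simp
    rw [integral_const_mul, hGamma, ← mul_assoc, hpow, mul_comm]
  have hnonneg : 0 ≤ᵐ[volume.restrict (Set.Ioi 0)] fun u : ℝ => a * (u ^ s * Real.exp (-(a * u))) :=
    ae_restrict_of_forall_mem measurableSet_Ioi fun u (hu : 0 < u) => by positivity
  rw [← hval, ofReal_integral_eq_lintegral_ofReal hint hnonneg]
  refine lintegral_congr fun u => ?_
  rw [← ENNReal.ofReal_mul (by positivity)]
  ring_nf

lemma lintegral_exp_neg_mul_eq_lintegral_measure_lt [SFinite κ] (hφ : Measurable φ) (ha : 0 < a) :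
    ∫⁻ x, ENNReal.ofReal (Real.exp (-(a * φ x))) ∂κ
      = ∫⁻ u, ENNReal.ofReal (a * Real.exp (-(a * u))) * κ {x | φ x < u} := by
  let k : X → ℝ → ENNReal := fun x u =>
    {p : X × ℝ | φ p.1 < p.2}.indicator (fun p => ENNReal.ofReal (a * Real.exp (-(a * p.2)))) (x, u)
  have hk : Measurable (Function.uncurry k) := Measurable.indicator (by fun_prop)
    (measurableSet_lt (hφ.comp measurable_fst) measurable_snd)
  calc ∫⁻ x, ENNReal.ofReal (Real.exp (-(a * φ x))) ∂κ
      = ∫⁻ x, (∫⁻ u, k x u) ∂κ := by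
        refine lintegral_congr fun x => ?_
        rw [← lintegral_Ioi_mul_exp_neg_mul ha, ← lintegral_indicator measurableSet_Ioi]
        rfl
    _ = ∫⁻ u, ∫⁻ x, k x u ∂κ := lintegral_lintegral_swap hk.aemeasurable
    _ = ∫⁻ u, ENNReal.ofReal (a * Real.exp (-(a * u))) * κ {x | φ x < u} :=
        lintegral_congr fun u => lintegral_indicator_const
          (measurableSet_lt hφ measurable_const) (ENNReal.ofReal (a * Real.exp (-(a * u))))

lemma lintegral_exp_neg_mul_le_rpow [SFinite κ] (hφ : Measurable φ) (hφ0 : ∀ x, 0 ≤ φ x)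
    (ha : 0 < a) (hs : -1 < s) {C : ENNReal}
    (hC : ∀ u > 0, κ {x | φ x < u} ≤ C * ENNReal.ofReal (u ^ s)) :
    ∫⁻ x, ENNReal.ofReal (Real.exp (-(a * φ x))) ∂κ
      ≤ C * ENNReal.ofReal (Real.Gamma (s + 1) * a ^ (-s)) := by
  rw [lintegral_exp_neg_mul_eq_lintegral_measure_lt hφ ha,
    ← lintegral_Ioi_mul_exp_neg_mul_mul_rpow ha hs, ← lintegral_const_mul _ (by fun_prop),
    ← lintegral_indicator measurableSet_Ioi]
  refine lintegral_mono fun u => ?_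
  rcases le_or_gt u 0 with hu | hu
  · have hempty : {x | φ x < u} = ∅ := Set.eq_empty_of_forall_notMem fun x hx =>
      (hu.trans (hφ0 x)).not_gt hx
    simp only [hempty, measure_empty, mul_zero, zero_le]
  · rw [Set.indicator_of_mem (Set.mem_Ioi.2 hu), mul_left_comm C]
    gcongr
    exact hC u hu

lemma integral_exp_neg_mul_le_rpow [IsFiniteMeasure κ] (hφ : Measurable φ) (hφ0 : ∀ x, 0 ≤ φ x)
    (ha : 0 < a) (hs : -1 < s) {C : ℝ} (hC : ∀ u > 0, κ.real {x | φ x < u} ≤ C * u ^ s) :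
    ∫ x, Real.exp (-(a * φ x)) ∂κ ≤ C * Real.Gamma (s + 1) * a ^ (-s) := by
  have hC0 : 0 ≤ C := by simpa using measureReal_nonneg.trans (hC 1 one_pos)
  have hGamma : 0 < Real.Gamma (s + 1) := Real.Gamma_pos_of_pos (by linarith)
  rw [integral_eq_lintegral_of_nonneg_ae (ae_of_all _ fun x => (Real.exp_pos _).le)
    (by fun_prop)]
  refine ENNReal.toReal_le_of_le_ofReal (by positivity) ?_
  rw [mul_assoc, ENNReal.ofReal_mul hC0]
  refine lintegral_exp_neg_mul_le_rpow hφ hφ0 ha hs fun u hu => ?_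
  rw [← ENNReal.ofReal_mul hC0, ← ofReal_measureReal]
  exact ENNReal.ofReal_le_ofReal (hC u hu)

lemma integral_exp_neg_mul_le_measureReal_univ [IsFiniteMeasure κ] (hφ0 : ∀ x, 0 ≤ φ x)
    (ha : 0 ≤ a) : ∫ x, Real.exp (-(a * φ x)) ∂κ ≤ κ.real Set.univ := by
  have hle : ∀ x, ‖Real.exp (-(a * φ x))‖ ≤ 1 := fun x => by
    rw [Real.norm_of_nonneg (Real.exp_pos _).le, Real.exp_le_one_iff, neg_nonpos]
    exact mul_nonneg ha (hφ0 x)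
  simpa only [one_mul] using
    (Real.le_norm_self _).trans (norm_integral_le_of_norm_le_const (ae_of_all κ hle))

lemma isBigO_rpow_of_rpow_neg_mul_le {I : ℝ → ℝ} {c p : ℝ} (hI : ∀ ρ, 0 ≤ I ρ)
    (h : ∀ᶠ ρ in 𝓝[>] 0, ρ ^ (-p) * I ρ ≤ c) : I =O[𝓝[>] 0] fun ρ => ρ ^ p := by
  refine .of_bound c ?_
  filter_upwards [h, self_mem_nhdsWithin] with ρ hρ (hρ0 : 0 < ρ)
  rw [Real.norm_of_nonneg (hI ρ), Real.norm_of_nonneg (by positivity)]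
  rwa [Real.rpow_neg hρ0.le, inv_mul_le_iff₀ (by positivity), mul_comm] at hρ

lemma exists_forall_measureReal_lt_le_rpow [IsFiniteMeasure κ] (hs : 0 ≤ s)
    (h : (fun u => κ.real {x | φ x < u}) =O[𝓝[>] 0] fun u => u ^ s) :
    ∃ C, ∀ u > 0, κ.real {x | φ x < u} ≤ C * u ^ s := by
  obtain ⟨c, hc⟩ := h.bound
  obtain ⟨δ, hδ : 0 < δ, hball⟩ := mem_nhdsGT_iff_exists_Ioo_subset.1 hc
  refine ⟨max c (κ.real Set.univ / δ ^ s), fun u (hu : 0 < u) => ?_⟩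
  rcases lt_or_ge u δ with hlt | hge
  · have hcu : ‖κ.real {x | φ x < u}‖ ≤ c * ‖u ^ s‖ := hball ⟨hu, hlt⟩
    rw [Real.norm_of_nonneg measureReal_nonneg, Real.norm_of_nonneg (by positivity)] at hcu
    exact hcu.trans (by gcongr; exact le_max_left _ _)
  · calc κ.real {x | φ x < u} ≤ κ.real Set.univ := measureReal_mono (Set.subset_univ _)
      _ = κ.real Set.univ / δ ^ s * δ ^ s := (div_mul_cancel₀ _ (by positivity)).symm
      _ ≤ max c (κ.real Set.univ / δ ^ s) * u ^ s := by
        gcongr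
        exact le_max_right _ _

lemma le_max_mul_one_add_rpow_neg {E W K t : ℝ} (hs : 0 ≤ s) (ht : 0 < t) (hW0 : 0 ≤ W) (hW : E ≤ W)
    (hK : E ≤ K * t ^ (-s)) : E ≤ max W K * 2 ^ s * (1 + t) ^ (-s) := by
  have hE : E ≤ max W K * max 1 t ^ (-s) := by
    rcases le_total t 1 with h | h
    · rw [max_eq_left h, Real.one_rpow, mul_one]
      exact hW.trans (le_max_left _ _)
    · rw [max_eq_right h]
      exact hK.trans (by gcongr; exact le_max_right _ _)
  have hmax : (1 + t) / 2 ≤ max 1 t := by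
    linarith [le_max_left 1 t, le_max_right 1 t]
  calc E ≤ max W K * max 1 t ^ (-s) := hE
    _ ≤ max W K * ((1 + t) / 2) ^ (-s) := by
      refine mul_le_mul_of_nonneg_left ?_ (le_max_of_le_left hW0)
      exact Real.rpow_le_rpow_of_nonpos (by positivity) hmax (neg_nonpos.2 hs)
    _ = max W K * 2 ^ s * (1 + t) ^ (-s) := by
      rw [Real.div_rpow (by positivity) zero_le_two, Real.rpow_neg zero_le_two, div_inv_eq_mul]
      ring

theorem exists_integral_exp_neg_mul_le_one_add_rpow [IsFiniteMeasure κ] (hφ : Measurable φ)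
    (hφ0 : ∀ x, 0 ≤ φ x) (h : (fun u => κ.real {x | φ x < u}) =O[𝓝[>] 0] fun u => u ^ s) :
    ∃ C, ∀ t > 0, ∫ x, Real.exp (-(t * φ x)) ∂κ ≤ C * (1 + t) ^ (-s) := by
  have hW (t : ℝ) (ht : 0 < t) := integral_exp_neg_mul_le_measureReal_univ (κ := κ) hφ0 ht.le
  rcases le_total s 0 with hs | hs
  · refine ⟨κ.real Set.univ, fun t ht => (hW t ht).trans ?_⟩
    exact le_mul_of_one_le_right measureReal_nonneg
      (Real.one_le_rpow (by linarith) (neg_nonneg.2 hs))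
  · obtain ⟨C, hC⟩ := exists_forall_measureReal_lt_le_rpow hs h
    refine ⟨_, fun t ht => le_max_mul_one_add_rpow_neg hs ht measureReal_nonneg (hW t ht)
      (integral_exp_neg_mul_le_rpow hφ hφ0 ht (by linarith) hC)⟩

end Abelian

lemma integrable_mul_of_weight_le {X : Type*} [MeasurableSpace X] {μ : Measure X}
    {w w' g : X → ℝ} {C : ℝ} (hwg : Integrable (fun x => w x * g x) μ)
    (hw : AEStronglyMeasurable w μ) (hw' : AEStronglyMeasurable w' μ) (hw0 : ∀ x, 0 < w x)
    (hle : ∀ x, ‖w' x‖ ≤ C * w x) : Integrable (fun x => w' x * g x) μ := by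
  have hbound : ∀ x, ‖w' x / w x‖ ≤ C := fun x => by
    rw [norm_div, Real.norm_of_nonneg (hw0 x).le, div_le_iff₀ (hw0 x)]
    exact hle x
  refine (hwg.bdd_mul (hw'.div₀ hw) (ae_of_all _ hbound)).congr (ae_of_all _ fun x => ?_)
  change w' x / w x * (w x * g x) = w' x * g x
  rw [← mul_assoc, div_mul_cancel₀ _ (hw0 x).ne']

section NavierStokesVoigt

/-- The rate `-M(ξ)` at which the linear Navier–Stokes–Voigt flow damps a Fourier mode, as a
function of the length `x = |ξ|` of the frequency. -/
noncomputable def voigtRate (α ν x : ℝ) : ℝ := ν * x ^ 2 / (1 + α ^ 2 * x ^ 2)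

section Rate

variable {α ν x u : ℝ}

lemma voigtRate_nonneg (hν : 0 ≤ ν) : 0 ≤ voigtRate α ν x := by
  unfold voigtRate
  positivity

lemma continuous_voigtRate : Continuous (voigtRate α ν) :=
  Continuous.div (by fun_prop) (by fun_prop) fun x => by positivity

lemma sq_le_of_voigtRate_lt (hν : 0 < ν) (hu : 2 * α ^ 2 * u ≤ ν) (h : voigtRate α ν x < u) :
    x ^ 2 ≤ 2 * u / ν := by
  rw [voigtRate, div_lt_iff₀ (by positivity)] at h
  rw [le_div_iff₀ hν]
  have habsorb : 2 * α ^ 2 * u * x ^ 2 ≤ ν * x ^ 2 := by gcongr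
  linarith

lemma one_add_mul_sq_le_two_of_voigtRate_lt (hν : 0 < ν) (hu : 2 * α ^ 2 * u ≤ ν)
    (h : voigtRate α ν x < u) : 1 + α ^ 2 * x ^ 2 ≤ 2 := by
  have hsmall : α ^ 2 * x ^ 2 ≤ 1 := calc
    α ^ 2 * x ^ 2 ≤ α ^ 2 * (2 * u / ν) := by gcongr; exact sq_le_of_voigtRate_lt hν hu h
    _ = 2 * α ^ 2 * u / ν := by ring
    _ ≤ 1 := (div_le_one hν).2 hu
  linarith

end Rate

variable {E F : Type*} [SeminormedAddCommGroup E] [MeasurableSpace E]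
  [SeminormedAddCommGroup F] {μ : Measure E} {α ν s : ℝ} {f : E → F}

/-- The distribution over the frequencies `ξ` of the `H¹_α` energy of a field whose Fourier
transform is `f`; its total mass is the squared `H¹_α` norm. -/
noncomputable def energyMeasure (μ : Measure E) (α : ℝ) (f : E → F) : Measure E :=
  μ.withDensity fun ξ => ENNReal.ofReal ((1 + α ^ 2 * ‖ξ‖ ^ 2) * ‖f ξ‖ ^ 2)

lemma integral_energyMeasure (hf : Integrable (fun ξ => (1 + α ^ 2 * ‖ξ‖ ^ 2) * ‖f ξ‖ ^ 2) μ)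
    (h : E → ℝ) : ∫ ξ, h ξ ∂energyMeasure μ α f
      = ∫ ξ, (1 + α ^ 2 * ‖ξ‖ ^ 2) * (h ξ * ‖f ξ‖ ^ 2) ∂μ := by
  rw [energyMeasure, integral_withDensity_eq_integral_toReal_smul₀
    hf.aemeasurable.ennreal_ofReal (ae_of_all _ fun ξ => ENNReal.ofReal_lt_top)]
  refine integral_congr_ae (ae_of_all _ fun ξ => ?_)
  dsimp only
  rw [ENNReal.toReal_ofReal (by positivity), smul_eq_mul]
  ring

lemma energyMeasure_real_apply (hf : Integrable (fun ξ => (1 + α ^ 2 * ‖ξ‖ ^ 2) * ‖f ξ‖ ^ 2) μ)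
    {S : Set E} (hS : MeasurableSet S) :
    (energyMeasure μ α f).real S = ∫ ξ in S, (1 + α ^ 2 * ‖ξ‖ ^ 2) * ‖f ξ‖ ^ 2 ∂μ := by
  rw [integral_eq_lintegral_of_nonneg_ae (ae_of_all _ fun ξ => by positivity)
    hf.aestronglyMeasurable.restrict, Measure.real, energyMeasure, withDensity_apply _ hS]

variable [OpensMeasurableSpace E]

lemma integrable_norm_sq_of_integrable_energy
    (hf : Integrable (fun ξ => (1 + α ^ 2 * ‖ξ‖ ^ 2) * ‖f ξ‖ ^ 2) μ) :
    Integrable (fun ξ => ‖f ξ‖ ^ 2) μ := by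
  have hone : ∀ ξ : E, ‖(1 : ℝ)‖ ≤ 1 * (1 + α ^ 2 * ‖ξ‖ ^ 2) := fun ξ => by
    rw [norm_one, one_mul]
    exact le_add_of_nonneg_right (by positivity)
  simpa only [one_mul] using integrable_mul_of_weight_le hf
    (Continuous.aestronglyMeasurable (by fun_prop)) aestronglyMeasurable_const
    (fun ξ => by positivity) hone

lemma integrable_energy_of_integrable_one_add_norm_sq_mul (α : ℝ)
    (hf : Integrable (fun ξ => (1 + ‖ξ‖ ^ 2) * ‖f ξ‖ ^ 2) μ) :
    Integrable (fun ξ => (1 + α ^ 2 * ‖ξ‖ ^ 2) * ‖f ξ‖ ^ 2) μ := by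
  refine integrable_mul_of_weight_le (C := 1 + α ^ 2) hf
    (Continuous.aestronglyMeasurable (by fun_prop)) (Continuous.aestronglyMeasurable (by fun_prop))
    (fun ξ => by positivity) fun ξ => ?_
  rw [Real.norm_of_nonneg (by positivity)]
  linarith [sq_nonneg ‖ξ‖, sq_nonneg α]

lemma energyMeasure_real_voigtRate_lt_le (hν : 0 < ν)
    (hf : Integrable (fun ξ => (1 + α ^ 2 * ‖ξ‖ ^ 2) * ‖f ξ‖ ^ 2) μ) {u : ℝ}
    (hu : 2 * α ^ 2 * u ≤ ν) :
    (energyMeasure μ α f).real {ξ | voigtRate α ν ‖ξ‖ < u}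
      ≤ 2 * ∫ ξ in closedBall 0 (Real.sqrt (2 * u / ν)), ‖f ξ‖ ^ 2 ∂μ := by
  have hS : MeasurableSet {ξ : E | voigtRate α ν ‖ξ‖ < u} :=
    measurableSet_lt (continuous_voigtRate.comp continuous_norm).measurable measurable_const
  have hsub : {ξ : E | voigtRate α ν ‖ξ‖ < u} ⊆ closedBall 0 (Real.sqrt (2 * u / ν)) :=
    fun ξ hξ => mem_closedBall_zero_iff.2 (Real.le_sqrt_of_sq_le (sq_le_of_voigtRate_lt hν hu hξ))
  have hg := integrable_norm_sq_of_integrable_energy hf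
  calc (energyMeasure μ α f).real {ξ | voigtRate α ν ‖ξ‖ < u}
      = ∫ ξ in {ξ | voigtRate α ν ‖ξ‖ < u}, (1 + α ^ 2 * ‖ξ‖ ^ 2) * ‖f ξ‖ ^ 2 ∂μ :=
        energyMeasure_real_apply hf hS
    _ ≤ ∫ ξ in {ξ | voigtRate α ν ‖ξ‖ < u}, 2 * ‖f ξ‖ ^ 2 ∂μ :=
        setIntegral_mono_on hf.integrableOn (hg.const_mul 2).integrableOn hS fun ξ hξ => by
          gcongr
          exact one_add_mul_sq_le_two_of_voigtRate_lt hν hu hξ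
    _ = 2 * ∫ ξ in {ξ | voigtRate α ν ‖ξ‖ < u}, ‖f ξ‖ ^ 2 ∂μ := integral_const_mul _ _
    _ ≤ 2 * ∫ ξ in closedBall 0 (Real.sqrt (2 * u / ν)), ‖f ξ‖ ^ 2 ∂μ := by
        gcongr 2 * ?_
        exact setIntegral_mono_set hg.integrableOn (ae_of_all _ fun ξ => by positivity)
          hsub.eventuallyLE

lemma energyMeasure_real_voigtRate_lt_isBigO (hν : 0 < ν)
    (hf : Integrable (fun ξ => (1 + α ^ 2 * ‖ξ‖ ^ 2) * ‖f ξ‖ ^ 2) μ)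
    (hlow : (fun ρ => ∫ ξ in closedBall 0 ρ, ‖f ξ‖ ^ 2 ∂μ) =O[𝓝[>] 0] fun ρ => ρ ^ (2 * s)) :
    (fun u => (energyMeasure μ α f).real {ξ | voigtRate α ν ‖ξ‖ < u})
      =O[𝓝[>] 0] fun u => u ^ s := by
  have hsqrt : Tendsto (fun u : ℝ => Real.sqrt (2 * u / ν)) (𝓝[>] 0) (𝓝[>] 0) := by
    refine tendsto_nhdsWithin_iff.2 ⟨?_, eventually_mem_nhdsWithin.mono fun u (hu : 0 < u) =>
      Real.sqrt_pos.2 (by positivity)⟩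
    have hcont : Continuous fun u : ℝ => Real.sqrt (2 * u / ν) := by fun_prop
    simpa using (hcont.tendsto 0).mono_left nhdsWithin_le_nhds
  have hsmall : ∀ᶠ u in 𝓝[>] (0 : ℝ), 2 * α ^ 2 * u ≤ ν := by
    have hcont : Continuous fun u : ℝ => 2 * α ^ 2 * u := by fun_prop
    have hlt := (hcont.tendsto 0).eventually_lt_const (by simpa using hν)
    exact nhdsWithin_le_nhds (hlt.mono fun u hu => hu.le)
  have hbound : (fun u => (energyMeasure μ α f).real {ξ | voigtRate α ν ‖ξ‖ < u}) =O[𝓝[>] 0]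
      fun u => ∫ ξ in closedBall 0 (Real.sqrt (2 * u / ν)), ‖f ξ‖ ^ 2 ∂μ := by
    refine .of_bound 2 (hsmall.mono fun u hu => ?_)
    rw [Real.norm_of_nonneg measureReal_nonneg,
      Real.norm_of_nonneg (integral_nonneg fun ξ => by positivity)]
    exact energyMeasure_real_voigtRate_lt_le hν hf hu
  have hpow : (fun u : ℝ => Real.sqrt (2 * u / ν) ^ (2 * s)) =ᶠ[𝓝[>] 0]
      fun u => (2 / ν) ^ s * u ^ s := eventually_mem_nhdsWithin.mono fun u (hu : 0 < u) => by
    dsimp only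
    rw [Real.rpow_mul (Real.sqrt_nonneg _), Real.rpow_two, Real.sq_sqrt (by positivity),
      mul_div_right_comm, Real.mul_rpow (by positivity) hu.le]
  exact ((hbound.trans (hlow.comp_tendsto hsqrt)).trans_eventuallyEq hpow).trans
    (Asymptotics.isBigO_const_mul_self _ _ _)

theorem linear_NSV_upper_decay_general (hν : 0 < ν)
    (hf : Integrable (fun ξ => (1 + α ^ 2 * ‖ξ‖ ^ 2) * ‖f ξ‖ ^ 2) μ)
    (hlow : ∃ c : ℝ, ∀ᶠ ρ in 𝓝[>] 0, ρ ^ (-(2 * s)) * ∫ ξ in closedBall 0 ρ, ‖f ξ‖ ^ 2 ∂μ ≤ c) :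
    ∃ C₂ > (0 : ℝ), ∃ C₃ > (0 : ℝ), ∀ t > (0 : ℝ),
      ∫ ξ, (1 + α ^ 2 * ‖ξ‖ ^ 2) *
          (Real.exp (2 * t * (-(ν * ‖ξ‖ ^ 2) / (1 + α ^ 2 * ‖ξ‖ ^ 2))) * ‖f ξ‖ ^ 2) ∂μ
        ≤ C₂ * (C₃ + t) ^ (-s) := by
  obtain ⟨c, hc⟩ := hlow
  have : IsFiniteMeasure (energyMeasure μ α f) := isFiniteMeasure_withDensity_ofReal hf.2
  have hrate : Measurable fun ξ : E => voigtRate α ν ‖ξ‖ :=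
    (continuous_voigtRate.comp continuous_norm).measurable
  obtain ⟨C, hC⟩ := exists_integral_exp_neg_mul_le_one_add_rpow hrate
    (fun ξ => voigtRate_nonneg hν.le) (energyMeasure_real_voigtRate_lt_isBigO hν hf
      (isBigO_rpow_of_rpow_neg_mul_le (fun ρ => integral_nonneg fun ξ => by positivity) hc))
  refine ⟨max C 1 * 2 ^ (-s), by positivity, 1 / 2, by norm_num, fun t (ht : 0 < t) => ?_⟩
  calc ∫ ξ, (1 + α ^ 2 * ‖ξ‖ ^ 2) *
          (Real.exp (2 * t * (-(ν * ‖ξ‖ ^ 2) / (1 + α ^ 2 * ‖ξ‖ ^ 2))) * ‖f ξ‖ ^ 2) ∂μ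
      = ∫ ξ, Real.exp (-(2 * t * voigtRate α ν ‖ξ‖)) ∂energyMeasure μ α f := by
        simp only [integral_energyMeasure hf, voigtRate, neg_div, mul_neg]
    _ ≤ C * (1 + 2 * t) ^ (-s) := hC (2 * t) (by positivity)
    _ ≤ max C 1 * (2 * (1 / 2 + t)) ^ (-s) := by
        rw [mul_add, mul_one_div_cancel two_ne_zero]
        gcongr
        exact le_max_left _ _
    _ = max C 1 * 2 ^ (-s) * (1 / 2 + t) ^ (-s) := by
        rw [Real.mul_rpow zero_le_two (by positivity), mul_assoc]

end NavierStokesVoigt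

/-- **Upper decay bound for the linear Navier–Stokes–Voigt equation.**
If `ν > α²` and the decay indicator of `v₀` at `r` has finite limsup as `ρ → 0⁺`, then the
`H¹_α` energy of the solution `v̂(ξ,t) = e^{tM(ξ)} v̂₀(ξ)`, `M(ξ) = -ν|ξ|²/(1+α²|ξ|²)`, is
bounded above by `C₂ (C₃+t)^{-(n/2+r)}`.  By Plancherel,
`‖v(t)‖²_{L²} + α²‖∇v(t)‖²_{L²} = ∫ (1+α²|ξ|²) e^{2tM(ξ)} |v̂₀(ξ)|² dξ`. -/
theorem linear_NSV_upper_decay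
    (n : ℕ) (hn : 1 ≤ n) (α ν : ℝ) (hα : 0 < α) (hν : 0 < ν) (hνα : α ^ 2 < ν)
    (F0 : EuclideanSpace ℝ (Fin n) → ℂ)
    (hH1 : Integrable (fun ξ : EuclideanSpace ℝ (Fin n) => (1 + ‖ξ‖ ^ 2) * ‖F0 ξ‖ ^ 2))
    (r : ℝ) (hr : -(n : ℝ) / 2 < r)
    (hlimsup : ∃ c : ℝ, ∀ᶠ ρ in 𝓝[>] (0:ℝ),
      ρ ^ (-(2 * r) - (n : ℝ)) *
        (∫ ξ in closedBall (0 : EuclideanSpace ℝ (Fin n)) ρ, ‖F0 ξ‖ ^ 2) ≤ c) :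
    ∃ C₂ > (0:ℝ), ∃ C₃ > (0:ℝ), ∀ t > (0:ℝ),
      (∫ ξ : EuclideanSpace ℝ (Fin n),
          (1 + α ^ 2 * ‖ξ‖ ^ 2) *
            (Real.exp (2 * t * (-(ν * ‖ξ‖ ^ 2) / (1 + α ^ 2 * ‖ξ‖ ^ 2))) * ‖F0 ξ‖ ^ 2))
        ≤ C₂ * (C₃ + t) ^ (-((n : ℝ) / 2 + r)) := by
  have hexp : -(2 * ((n : ℝ) / 2 + r)) = -(2 * r) - n := by ring
  exact linear_NSV_upper_decay_general hν
    (integrable_energy_of_integrable_one_add_norm_sq_mul α hH1) (by simpa only [hexp] using hlimsup)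
end

section
/- Let s > 0 and u₀ ∈ H^s(ℝⁿ). If there exists r ∈ (−n/2, ∞) such that the decay indicator P_r(u₀) = lim_{ρ→0⁺} ρ^{−2r−n} ∫_{|ξ|≤ρ} |û₀(ξ)|² dξ exists and satisfies 0 < P_r(u₀) < ∞, then the s-decay indicator at order s + r, namely P^s_{s+r}(u₀) = lim_{ρ→0⁺} ρ^{−2(s+r)−n} ∫_{|ξ|≤ρ} |ξ|^{2s} |û₀(ξ)|² dξ, exists and satisfies 0 < P^s_{s+r}(u₀) < ∞. In other words, if the decay character of u₀ is r* ∈ (−n/2, ∞), then the decay character of Λ^s u₀ is r*_s = s + r*. -/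
open MeasureTheory Filter Topology Metric

/-!
Write `m t = ∫_{‖ξ‖ ≤ t} |û₀|²`, so that `ρ ^ (-a) * m ρ → P` with `a = 2 * r + n`. Fubini applied
to `ρ ^ b - ‖ξ‖ ^ b = ∫_{‖ξ‖}^ρ b t ^ (b - 1) dt` expresses `∫_{‖ξ‖ ≤ ρ} ‖ξ‖ ^ b |û₀|²` through `m`
alone. After rescaling `t = ρ u`,
`ρ ^ (-(a + b)) ∫_{‖ξ‖ ≤ ρ} ‖ξ‖ ^ b |û₀|² =
  ρ ^ (-a) m ρ - ∫_0^1 b u ^ (a + b - 1) ((ρ u) ^ (-a) m (ρ u)) du`,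
and dominated convergence gives the limit `P - b / (a + b) * P = a / (a + b) * P`.
Take `b = 2 * s`.
-/

theorem setOf_div_le {α : Type*} {N : α → ℝ} {ρ u : ℝ} (hρ : 0 < ρ) :
    {x | N x / ρ ≤ u} = {x | N x ≤ ρ * u} := by
  simp only [div_le_iff₀' hρ]

section SublevelIntegrals

variable {α E : Type*} [MeasurableSpace α] {μ : Measure α} [SFinite μ]
  [NormedAddCommGroup E] [NormedSpace ℝ E] {N : α → ℝ} {g : α → E}

theorem aestronglyMeasurable_setIntegral_le {c : ℝ} (hN : Measurable N)
    (hg : AEStronglyMeasurable g (μ.restrict {x | N x ≤ c})) :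
    AEStronglyMeasurable (fun t => ∫ x in {x | N x ≤ t}, g x ∂μ) (volume.restrict (Set.Iic c)) := by
  have hS : MeasurableSet {p : ℝ × α | N p.2 ≤ p.1} := measurableSet_le (by fun_prop) (by fun_prop)
  have hmeas : AEStronglyMeasurable
      (fun t => ∫ x in {x | N x ≤ c}, {x | N x ≤ t}.indicator g x ∂μ)
      (volume.restrict (Set.Iic c)) :=
    (hg.comp_snd.indicator hS).integral_prod_right'
  refine hmeas.congr ((ae_restrict_mem measurableSet_Iic).mono fun t ht => ?_)
  have htc : {x | N x ≤ t} ⊆ {x | N x ≤ c} :=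
    fun _ (hx : N _ ≤ t) => show N _ ≤ c from hx.trans ht
  simp only [setIntegral_indicator (measurableSet_le hN measurable_const),
    Set.inter_eq_right.2 htc]

theorem setIntegral_intervalIntegral_smul_eq_intervalIntegral_smul_setIntegral
    [CompleteSpace E] {a c : ℝ} {w : ℝ → ℝ} (hac : a ≤ c) (hN : Measurable N) (haN : ∀ x, a ≤ N x)
    (hg : IntegrableOn g {x | N x ≤ c} μ) (hw : IntervalIntegrable w volume a c) :
    ∫ x in {x | N x ≤ c}, (∫ t in N x..c, w t) • g x ∂μ =
      ∫ t in a..c, w t • ∫ x in {x | N x ≤ t}, g x ∂μ := by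
  let S : Set (ℝ × α) := {p | N p.2 ≤ p.1}
  have hS : MeasurableSet S := measurableSet_le (by fun_prop) (by fun_prop)
  have hlevel (t : ℝ) : MeasurableSet {x | N x ≤ t} := measurableSet_le hN measurable_const
  have hint : Integrable (S.indicator fun p => w p.1 • g p.2)
      ((volume.restrict (Set.Ioc a c)).prod (μ.restrict {x | N x ≤ c})) :=
    (((intervalIntegrable_iff_integrableOn_Ioc_of_le hac).1 hw).smul_prod hg).indicator hS
  have integral_fst : ∀ x ∈ {x | N x ≤ c},
      ∫ t in Set.Ioc a c, S.indicator (fun p => w p.1 • g p.2) (t, x) =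
        (∫ t in N x..c, w t) • g x := by
    intro x hx
    have hIoc : (Set.Ioc a c ∩ Set.Ici (N x) : Set ℝ) =ᵐ[volume] (Set.Ioc (N x) c : Set ℝ) := by
      simpa only [Set.Ioc_inter_Ioi, sup_of_le_right (haN x)] using
        ae_eq_set_inter (ae_eq_refl (Set.Ioc a c)) (Ioi_ae_eq_Ici (μ := volume) (a := N x)).symm
    calc ∫ t in Set.Ioc a c, S.indicator (fun p => w p.1 • g p.2) (t, x)
      _ = ∫ t in Set.Ioc a c, (Set.Ici (N x)).indicator (fun t => w t • g x) t := rfl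
      _ = ∫ t in Set.Ioc (N x) c, w t • g x := by
        rw [setIntegral_indicator measurableSet_Ici, setIntegral_congr_set hIoc]
      _ = (∫ t in N x..c, w t) • g x := by
        rw [integral_smul_const, intervalIntegral.integral_of_le hx]
  have integral_snd : ∀ t ∈ Set.Ioc a c,
      ∫ x in {x | N x ≤ c}, S.indicator (fun p => w p.1 • g p.2) (t, x) ∂μ =
        w t • ∫ x in {x | N x ≤ t}, g x ∂μ := by
    intro t ht
    have htc : {x | N x ≤ t} ⊆ {x | N x ≤ c} :=
      fun _ (hx : N _ ≤ t) => show N _ ≤ c from hx.trans ht.2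
    calc ∫ x in {x | N x ≤ c}, S.indicator (fun p => w p.1 • g p.2) (t, x) ∂μ
      _ = ∫ x in {x | N x ≤ c}, {x | N x ≤ t}.indicator (fun x => w t • g x) x ∂μ := rfl
      _ = w t • ∫ x in {x | N x ≤ t}, g x ∂μ := by
        rw [setIntegral_indicator (hlevel t), Set.inter_eq_right.2 htc, integral_smul]
  rw [intervalIntegral.integral_of_le hac, ← setIntegral_congr_fun (hlevel c) integral_fst,
    ← setIntegral_congr_fun measurableSet_Ioc integral_snd]
  exact (integral_integral_swap
    (f := fun t x => S.indicator (fun p => w p.1 • g p.2) (t, x)) hint).symm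

theorem setIntegral_rpow_smul_eq_sub [CompleteSpace E] {b : ℝ} (hb : 0 < b) (hN : Measurable N)
    (hN0 : ∀ x, 0 ≤ N x) (hg : IntegrableOn g {x | N x ≤ 1} μ) :
    ∫ x in {x | N x ≤ 1}, N x ^ b • g x ∂μ =
      ∫ x in {x | N x ≤ 1}, g x ∂μ -
        ∫ u in (0 : ℝ)..1, (b * u ^ (b - 1)) • ∫ x in {x | N x ≤ u}, g x ∂μ := by
  have hlevel : MeasurableSet {x | N x ≤ 1} := measurableSet_le hN measurable_const
  have hw : IntervalIntegrable (fun u : ℝ => b * u ^ (b - 1)) volume 0 1 :=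
    (intervalIntegral.intervalIntegrable_rpow' (by linarith)).const_mul b
  have integral_weight (y : ℝ) : ∫ u in y..1, b * u ^ (b - 1) = 1 - y ^ b := by
    rw [intervalIntegral.integral_const_mul, integral_rpow (Or.inl (by linarith))]
    simp [mul_div_cancel₀, hb.ne']
  have hNg : IntegrableOn (fun x => N x ^ b • g x) {x | N x ≤ 1} μ := by
    refine hg.bdd_smul 1 (hN.pow_const b).aestronglyMeasurable ?_
    filter_upwards [ae_restrict_mem hlevel] with x hx
    rw [Real.norm_of_nonneg (Real.rpow_nonneg (hN0 x) b)]
    exact Real.rpow_le_one (hN0 x) hx hb.le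
  rw [← setIntegral_intervalIntegral_smul_eq_intervalIntegral_smul_setIntegral zero_le_one hN hN0
    hg hw]
  simp only [integral_weight, sub_smul, one_smul]
  rw [integral_sub hg hNg, sub_sub_cancel]

theorem rpow_smul_setIntegral_rpow_smul_eq_sub [CompleteSpace E] {a b ρ : ℝ} (hb : 0 < b)
    (hρ : 0 < ρ) (hN : Measurable N) (hN0 : ∀ x, 0 ≤ N x) (hg : IntegrableOn g {x | N x ≤ ρ} μ) :
    ρ ^ (-(a + b)) • ∫ x in {x | N x ≤ ρ}, N x ^ b • g x ∂μ =
      ρ ^ (-a) • ∫ x in {x | N x ≤ ρ}, g x ∂μ -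
        ∫ u in (0 : ℝ)..1, (b * u ^ (a + b - 1)) •
          (ρ * u) ^ (-a) • ∫ x in {x | N x ≤ ρ * u}, g x ∂μ := by
  have hunit := setIntegral_rpow_smul_eq_sub (μ := μ) (g := g) hb (hN.div_const ρ)
    (fun x => div_nonneg (hN0 x) hρ.le) (by rwa [setOf_div_le hρ, mul_one])
  simp only [setOf_div_le hρ, mul_one] at hunit
  have hpow (x : α) : (N x / ρ) ^ b = ρ ^ (-b) * N x ^ b := by
    rw [Real.div_rpow (hN0 x) hρ.le, Real.rpow_neg hρ.le, div_eq_inv_mul]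
  have hweight {u : ℝ} (hu : 0 < u) :
      ρ ^ (-a) * (b * u ^ (b - 1)) = b * u ^ (a + b - 1) * (ρ * u) ^ (-a) := by
    have hu_pow : u ^ (b - 1) = u ^ (a + b - 1) * u ^ (-a) := by
      rw [← Real.rpow_add hu]
      ring_nf
    rw [hu_pow, Real.mul_rpow hρ.le hu.le]
    ring
  calc ρ ^ (-(a + b)) • ∫ x in {x | N x ≤ ρ}, N x ^ b • g x ∂μ
    _ = ρ ^ (-a) • ∫ x in {x | N x ≤ ρ}, (N x / ρ) ^ b • g x ∂μ := by
      simp only [hpow, mul_smul, integral_smul]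
      rw [smul_smul, ← Real.rpow_add hρ, neg_add]
    _ = ρ ^ (-a) • ∫ x in {x | N x ≤ ρ}, g x ∂μ -
          ∫ u in (0 : ℝ)..1, ρ ^ (-a) • (b * u ^ (b - 1)) •
            ∫ x in {x | N x ≤ ρ * u}, g x ∂μ := by
      rw [hunit, smul_sub, intervalIntegral.integral_smul]
    _ = ρ ^ (-a) • ∫ x in {x | N x ≤ ρ}, g x ∂μ -
          ∫ u in (0 : ℝ)..1, (b * u ^ (a + b - 1)) •
            (ρ * u) ^ (-a) • ∫ x in {x | N x ≤ ρ * u}, g x ∂μ := by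
      congr 1
      refine intervalIntegral.integral_congr_Ioo_of_le zero_le_one fun u hu => ?_
      simp only [smul_smul, hweight hu.1]

end SublevelIntegrals

theorem tendsto_intervalIntegral_smul_comp_mul {E : Type*} [NormedAddCommGroup E]
    [NormedSpace ℝ E] [CompleteSpace E] {f : ℝ → E} {w : ℝ → ℝ} {L : E}
    (hw : IntervalIntegrable w volume 0 1)
    (hfm : ∀ᶠ ρ in 𝓝[>] (0 : ℝ),
      AEStronglyMeasurable (fun u => f (ρ * u)) (volume.restrict (Set.Ioc 0 1)))
    (hf : Tendsto f (𝓝[>] 0) (𝓝 L)) :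
    Tendsto (fun ρ => ∫ u in (0 : ℝ)..1, w u • f (ρ * u)) (𝓝[>] 0)
      (𝓝 ((∫ u in (0 : ℝ)..1, w u) • L)) := by
  have eventually_norm_le : ∀ᶠ t in 𝓝[>] (0 : ℝ), ‖f t‖ ≤ ‖L‖ + 1 :=
    hf.norm.eventually_le_const (lt_add_one _)
  obtain ⟨δ, hδ, hbound⟩ := mem_nhdsGT_iff_exists_Ioo_subset.1 eventually_norm_le
  have hscale {u : ℝ} (hu : 0 < u) : Tendsto (fun ρ => ρ * u) (𝓝[>] 0) (𝓝[>] 0) := by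
    simpa only [id, zero_mul] using TendstoNhdsWithinIoi.mul_const (c := (0 : ℝ)) hu tendsto_id
  rw [← intervalIntegral.integral_smul_const]
  refine intervalIntegral.tendsto_integral_filter_of_dominated_convergence
    (fun u => ‖w u‖ * (‖L‖ + 1)) ?_ ?_ (hw.norm.mul_const _) ?_
  · filter_upwards [hfm] with ρ hρ
    rw [Set.uIoc_of_le zero_le_one]
    exact ((intervalIntegrable_iff_integrableOn_Ioc_of_le zero_le_one).1 hw).1.smul hρ
  · filter_upwards [Ioo_mem_nhdsGT hδ] with ρ ⟨hρ0, hρδ⟩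
    refine .of_forall fun u hu => ?_
    rw [Set.uIoc_of_le zero_le_one] at hu
    rw [norm_smul]
    gcongr
    exact hbound ⟨mul_pos hρ0 hu.1, (mul_le_of_le_one_right hρ0.le hu.2).trans_lt hρδ⟩
  · refine .of_forall fun u hu => ?_
    rw [Set.uIoc_of_le zero_le_one] at hu
    exact (hf.comp (hscale hu.1)).const_smul (w u)

theorem tendsto_rpow_smul_setIntegral_rpow_smul {α E : Type*} [MeasurableSpace α] {μ : Measure α}
    [SFinite μ] [NormedAddCommGroup E] [NormedSpace ℝ E] [CompleteSpace E] {N : α → ℝ} {g : α → E}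
    {a b : ℝ} {L : E} (hb : 0 < b) (hab : 0 < a + b) (hN : Measurable N) (hN0 : ∀ x, 0 ≤ N x)
    (hg : ∀ᶠ ρ in 𝓝[>] (0 : ℝ), IntegrableOn g {x | N x ≤ ρ} μ)
    (hlim : Tendsto (fun ρ : ℝ => ρ ^ (-a) • ∫ x in {x | N x ≤ ρ}, g x ∂μ) (𝓝[>] 0) (𝓝 L)) :
    Tendsto (fun ρ : ℝ => ρ ^ (-(a + b)) • ∫ x in {x | N x ≤ ρ}, N x ^ b • g x ∂μ) (𝓝[>] 0)
      (𝓝 ((a / (a + b)) • L)) := by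
  have hw : IntervalIntegrable (fun u : ℝ => b * u ^ (a + b - 1)) volume 0 1 :=
    (intervalIntegral.intervalIntegrable_rpow' (by linarith)).const_mul b
  have integral_weight : ∫ u in (0 : ℝ)..1, b * u ^ (a + b - 1) = b / (a + b) := by
    rw [intervalIntegral.integral_const_mul, integral_rpow (Or.inl (by linarith)), sub_add_cancel,
      Real.one_rpow, Real.zero_rpow hab.ne', sub_zero, mul_one_div]
  have hmeas : ∀ᶠ ρ in 𝓝[>] (0 : ℝ), AEStronglyMeasurable
      (fun u => (ρ * u) ^ (-a) • ∫ x in {x | N x ≤ ρ * u}, g x ∂μ)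
      (volume.restrict (Set.Ioc 0 1)) := by
    filter_upwards [hg, self_mem_nhdsWithin] with ρ hgρ hρ
    have hm := aestronglyMeasurable_setIntegral_le (μ := μ) (g := g) (c := 1) (hN.div_const ρ)
      (by simpa only [setOf_div_le hρ, mul_one] using hgρ.aestronglyMeasurable)
    simp only [setOf_div_le hρ] at hm
    exact ((measurable_const_mul ρ).pow_const (-a)).aestronglyMeasurable.smul
      (hm.mono_set Set.Ioc_subset_Iic_self)
  have hmean := tendsto_intervalIntegral_smul_comp_mul hw hmeas hlim
  have hL : L - (b / (a + b)) • L = (a / (a + b)) • L := by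
    have hfrac : a / (a + b) = 1 - b / (a + b) := by
      rw [eq_sub_iff_add_eq, ← add_div, div_self hab.ne']
    rw [hfrac, sub_smul, one_smul]
  rw [integral_weight] at hmean
  rw [← hL]
  refine (hlim.sub hmean).congr' ?_
  filter_upwards [hg, self_mem_nhdsWithin] with ρ hgρ hρ
  exact (rpow_smul_setIntegral_rpow_smul_eq_sub hb hρ hN hN0 hgρ).symm

theorem decay_character_shift_general {V F : Type*} [SeminormedAddCommGroup V] [MeasurableSpace V]
    [OpensMeasurableSpace V] {μ : Measure V} [SFinite μ] [SeminormedAddCommGroup F] {f : V → F}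
    {d r s P : ℝ} (hs : 0 < s) (hsr : -d / 2 < s + r) (hP : P ≠ 0)
    (hlim : Tendsto (fun ρ : ℝ => ρ ^ (-(2 * r) - d) * ∫ ξ in closedBall 0 ρ, ‖f ξ‖ ^ 2 ∂μ)
      (𝓝[>] 0) (𝓝 P)) :
    Tendsto (fun ρ : ℝ => ρ ^ (-(2 * (s + r)) - d) *
        ∫ ξ in closedBall 0 ρ, ‖ξ‖ ^ (2 * s) * ‖f ξ‖ ^ 2 ∂μ)
      (𝓝[>] 0) (𝓝 ((2 * r + d) / (2 * (s + r) + d) * P)) := by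
  have hball (ρ : ℝ) : closedBall (0 : V) ρ = {ξ | ‖ξ‖ ≤ ρ} := by ext; simp
  -- A non-integrable `‖f‖ ^ 2` would have integral `0`, against `P ≠ 0`.
  have hint : ∀ᶠ ρ in 𝓝[>] (0 : ℝ), IntegrableOn (fun ξ => ‖f ξ‖ ^ 2) {ξ | ‖ξ‖ ≤ ρ} μ := by
    filter_upwards [hlim.eventually_ne hP] with ρ hρ
    rw [← hball]
    exact .of_integral_ne_zero (right_ne_zero_of_mul hρ)
  have hexp : -(2 * r) - d = -(2 * r + d) := by ring
  have hexp' : -(2 * (s + r)) - d = -(2 * r + d + 2 * s) := by ring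
  have hden : 2 * (s + r) + d = 2 * r + d + 2 * s := by ring
  simp only [hexp, hexp', hden, hball] at hlim ⊢
  exact tendsto_rpow_smul_setIntegral_rpow_smul (by linarith) (by linarith)
    continuous_norm.measurable norm_nonneg hint hlim

/-- **The decay character shifts by `s` under `Λ^s`.**
Let `u₀ ∈ H^s(ℝⁿ)`, `s > 0` (encoded via Plancherel as integrability of
`(1+|ξ|²)^s |û₀(ξ)|²`).  If the decay indicator
`P_r(u₀) = lim_{ρ→0⁺} ρ^{-2r-n} ∫_{|ξ|≤ρ} |û₀|²` exists and lies in `(0,∞)` for some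
`r ∈ (-n/2, ∞)`, then the `s`-decay indicator at order `s + r`,
`P^s_{s+r}(u₀) = lim_{ρ→0⁺} ρ^{-2(s+r)-n} ∫_{|ξ|≤ρ} |ξ|^{2s} |û₀|²`,
exists and lies in `(0,∞)`; i.e. `r*_s(u₀) = s + r*(u₀)`. -/
theorem decay_character_shift
    (n : ℕ) (hn : 1 ≤ n) (s : ℝ) (hs : 0 < s)
    (F0 : EuclideanSpace ℝ (Fin n) → ℂ)
    (hHs : Integrable (fun ξ : EuclideanSpace ℝ (Fin n) =>
      (1 + ‖ξ‖ ^ 2) ^ s * ‖F0 ξ‖ ^ 2))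
    (r : ℝ) (hr : -(n : ℝ) / 2 < r)
    (P : ℝ) (hP : 0 < P)
    (hlim : Tendsto (fun ρ : ℝ => ρ ^ (-(2 * r) - (n : ℝ)) *
        ∫ ξ in closedBall (0 : EuclideanSpace ℝ (Fin n)) ρ, ‖F0 ξ‖ ^ 2)
      (𝓝[>] (0:ℝ)) (𝓝 P)) :
    ∃ Q : ℝ, 0 < Q ∧ Tendsto (fun ρ : ℝ => ρ ^ (-(2 * (s + r)) - (n : ℝ)) *
        ∫ ξ in closedBall (0 : EuclideanSpace ℝ (Fin n)) ρ, ‖ξ‖ ^ (2 * s) * ‖F0 ξ‖ ^ 2)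
      (𝓝[>] (0:ℝ)) (𝓝 Q) := by
  exact ⟨_, mul_pos (div_pos (by linarith) (by linarith)) hP,
    decay_character_shift_general hs (by linarith) hP.ne' hlim⟩
end

section
/- Let s > 0 and u₀ ∈ H^s(ℝⁿ). Then the following are equivalent: (a) for every r ∈ (−n/2, ∞), ρ^{−2r−n} ∫_{|ξ|≤ρ} |û₀(ξ)|² dξ → 0 as ρ → 0⁺; (b) for every r ∈ (−n/2 + s, ∞), ρ^{−2r−n} ∫_{|ξ|≤ρ} |ξ|^{2s} |û₀(ξ)|² dξ → 0 as ρ → 0⁺. In other words, the decay character of u₀ equals ∞ if and only if the decay character of Λ^s u₀ equals ∞. -/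
open MeasureTheory Filter Topology Metric

/-!
Write `m ρ = ∫_{‖ξ‖ ≤ ρ} |û₀|²` and `M ρ = ∫_{‖ξ‖ ≤ ρ} ‖ξ‖ ^ (2s) |û₀|²`. For each fixed `a > 0`,
`m = o(ρ ^ a)` if and only if `M = o(ρ ^ (a + 2s))`. One direction is `M ρ ≤ ρ ^ (2s) * m ρ`.
Conversely, on the shell `ρ/2 < ‖ξ‖ ≤ ρ` the weight is comparable to `ρ ^ (2s)`, so
`m ρ - m (ρ/2) = o(ρ ^ a)`; since `m ρ → 0`, summing the geometric series over the dyadic shells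
gives `m = o(ρ ^ a)`.
-/

open Asymptotics

theorem isLittleO_rpow_iff_tendsto_rpow_neg_mul {g : ℝ → ℝ} {a : ℝ} :
    g =o[𝓝[>] 0] (fun ρ => ρ ^ a) ↔ Tendsto (fun ρ => ρ ^ (-a) * g ρ) (𝓝[>] 0) (𝓝 0) := by
  rw [isLittleO_iff_tendsto']
  · refine tendsto_congr' ?_
    filter_upwards [self_mem_nhdsWithin] with ρ (hρ : 0 < ρ)
    rw [Real.rpow_neg hρ.le, div_eq_inv_mul]
  · filter_upwards [self_mem_nhdsWithin] with ρ (hρ : 0 < ρ) h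
    exact absurd h (Real.rpow_pos_of_pos hρ a).ne'

section GeometricScales

variable {G : Type*} [NormedAddCommGroup G] {g : ℝ → G} {a q : ℝ}

theorem norm_le_rpow_of_norm_sub_mul_le {c ρ : ℝ} (ha : 0 < a) (hq₀ : 0 < q) (hq₁ : q < 1)
    (hρ : 0 < ρ) (hg : Tendsto g (𝓝[>] 0) (𝓝 0))
    (h : ∀ t, 0 < t → t ≤ ρ → ‖g t - g (q * t)‖ ≤ c * t ^ a) :
    ‖g ρ‖ ≤ c * ρ ^ a / (1 - q ^ a) := by
  have scale_pos (k : ℕ) : 0 < q ^ k * ρ := by positivity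
  have scale_le (k : ℕ) : q ^ k * ρ ≤ ρ :=
    mul_le_of_le_one_left hρ.le (pow_le_one₀ hq₀.le hq₁.le)
  have scale_tendsto : Tendsto (fun k : ℕ => q ^ k * ρ) atTop (𝓝[>] 0) :=
    tendsto_nhdsWithin_iff.2
      ⟨by simpa using (tendsto_pow_atTop_nhds_zero_of_lt_one hq₀.le hq₁).mul_const ρ,
        Eventually.of_forall scale_pos⟩
  have increment_le (k : ℕ) :
      dist (g (q ^ k * ρ)) (g (q ^ (k + 1) * ρ)) ≤ c * ρ ^ a * (q ^ a) ^ k :=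
    calc dist (g (q ^ k * ρ)) (g (q ^ (k + 1) * ρ))
        = ‖g (q ^ k * ρ) - g (q * (q ^ k * ρ))‖ := by rw [dist_eq_norm, pow_succ', mul_assoc]
      _ ≤ c * (q ^ k * ρ) ^ a := h _ (scale_pos k) (scale_le k)
      _ = c * ρ ^ a * (q ^ a) ^ k := by
        rw [Real.mul_rpow (by positivity) hρ.le, Real.rpow_pow_comm hq₀.le]
        ring
  simpa using dist_le_of_le_geometric_of_tendsto₀ _ _ (Real.rpow_lt_one hq₀.le hq₁ ha)
    increment_le (hg.comp scale_tendsto)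

theorem isLittleO_rpow_of_sub_mul_isLittleO (ha : 0 < a) (hq₀ : 0 < q) (hq₁ : q < 1)
    (hg : Tendsto g (𝓝[>] 0) (𝓝 0))
    (h : (fun ρ => g ρ - g (q * ρ)) =o[𝓝[>] 0] fun ρ => ρ ^ a) :
    g =o[𝓝[>] 0] fun ρ => ρ ^ a := by
  have hqa : 0 < 1 - q ^ a := sub_pos.2 (Real.rpow_lt_one hq₀.le hq₁ ha)
  refine isLittleO_iff.2 fun ε hε => ?_
  obtain ⟨R, hR, increment_le⟩ :=
    mem_nhdsGT_iff_exists_Ioo_subset.1 (isLittleO_iff.1 h (mul_pos hε hqa))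
  filter_upwards [Ioo_mem_nhdsGT hR] with ρ hρ
  rw [Real.norm_of_nonneg (Real.rpow_nonneg hρ.1.le a)]
  calc ‖g ρ‖ ≤ ε * (1 - q ^ a) * ρ ^ a / (1 - q ^ a) :=
        norm_le_rpow_of_norm_sub_mul_le ha hq₀ hq₁ hρ.1 hg fun t ht htρ => by
          simpa only [Set.mem_ofPred_eq, Real.norm_of_nonneg (Real.rpow_nonneg ht.le a)] using
            increment_le ⟨ht, htρ.trans_lt hρ.2⟩
    _ = ε * ρ ^ a := by field_simp

end GeometricScales

theorem integrable_of_one_le_of_integrable_mul {α : Type*} [MeasurableSpace α] {μ : Measure α}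
    {w f : α → ℝ} (hw : Measurable w) (one_le : ∀ x, 1 ≤ w x)
    (h : Integrable (fun x => w x * f x) μ) : Integrable f μ := by
  have inv_le (x : α) : ‖(w x)⁻¹‖ ≤ 1 := by
    rw [norm_inv, Real.norm_of_nonneg (zero_le_one.trans (one_le x))]
    exact inv_le_one_of_one_le₀ (one_le x)
  refine (h.bdd_mul hw.inv.aestronglyMeasurable (.of_forall inv_le)).congr (.of_forall fun x => ?_)
  exact inv_mul_cancel_left₀ (zero_lt_one.trans_le (one_le x)).ne' (f x)

theorem eventually_integrableOn_closedBall {X G : Type*} [PseudoMetricSpace X] [MeasurableSpace X]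
    [NormedAddCommGroup G] {μ : Measure X} {f : X → G} {x : X}
    (hf : IntegrableAtFilter f (𝓝 x) μ) :
    ∀ᶠ ρ in 𝓝[>] 0, IntegrableOn f (closedBall x ρ) μ :=
  nhdsWithin_le_nhds ((tendsto_closedBall_smallSets x).eventually hf.eventually)

theorem tendsto_setIntegral_closedBall_nhdsGT_zero {X G : Type*} [MetricSpace X]
    [MeasurableSpace X] [OpensMeasurableSpace X] [NormedAddCommGroup G] [NormedSpace ℝ G]
    {μ : Measure X} {f : X → G} {x : X} (hx : μ {x} = 0) (hf : IntegrableAtFilter f (𝓝 x) μ) :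
    Tendsto (fun ρ => ∫ y in closedBall x ρ, f y ∂μ) (𝓝[>] 0) (𝓝 0) := by
  obtain ⟨s, hs, hfs⟩ := hf
  have restrict_eq : ∀ᶠ ρ in 𝓝[>] (0 : ℝ),
      ∫ y in s, (closedBall x ρ).indicator f y ∂μ = ∫ y in closedBall x ρ, f y ∂μ := by
    filter_upwards [nhdsWithin_le_nhds
      ((tendsto_closedBall_smallSets x).eventually (eventually_smallSets_subset.2 hs))] with ρ hρ
    rw [setIntegral_indicator measurableSet_closedBall, Set.inter_eq_self_of_subset_right hρ]
  have indicator_tendsto : ∀ᵐ y ∂μ.restrict s,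
      Tendsto (fun ρ => (closedBall x ρ).indicator f y) (𝓝[>] 0) (𝓝 0) := by
    filter_upwards [ae_restrict_of_ae (compl_mem_ae_iff.2 hx)] with y (hy : y ≠ x)
    refine tendsto_const_nhds.congr' ?_
    filter_upwards [Ioo_mem_nhdsGT (dist_pos.2 hy)] with ρ hρ
    exact (Set.indicator_of_notMem (s := closedBall x ρ) (not_le.2 hρ.2) f).symm
  refine Tendsto.congr' restrict_eq ?_
  rw [← integral_zero X G (μ := μ.restrict s)]
  exact tendsto_integral_filter_of_dominated_convergence (fun y => ‖f y‖)
    (.of_forall fun ρ => hfs.aestronglyMeasurable.indicator measurableSet_closedBall)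
    (.of_forall fun ρ => .of_forall fun y => norm_indicator_le_norm_self f y)
    hfs.norm indicator_tendsto

section BallIntegrals

variable {E : Type*} [NormedAddCommGroup E] [MeasurableSpace E] [OpensMeasurableSpace E]
  {μ : Measure E} {f : E → ℝ} {p : ℝ}

theorem integrableOn_norm_rpow_mul_closedBall {ρ : ℝ} (hp : 0 ≤ p)
    (hf : IntegrableOn f (closedBall 0 ρ) μ) :
    IntegrableOn (fun ξ => ‖ξ‖ ^ p * f ξ) (closedBall 0 ρ) μ := by
  refine hf.bdd_mul (c := ρ ^ p) (measurable_norm.pow_const p).aestronglyMeasurable ?_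
  filter_upwards [ae_restrict_mem measurableSet_closedBall] with ξ hξ
  rw [Real.norm_of_nonneg (by positivity)]
  exact Real.rpow_le_rpow (norm_nonneg ξ) (mem_closedBall_zero_iff.1 hξ) hp

theorem setIntegral_norm_rpow_mul_closedBall_le {ρ : ℝ} (hp : 0 ≤ p) (hf₀ : 0 ≤ f)
    (hf : IntegrableOn f (closedBall 0 ρ) μ) :
    ∫ ξ in closedBall 0 ρ, ‖ξ‖ ^ p * f ξ ∂μ ≤ ρ ^ p * ∫ ξ in closedBall 0 ρ, f ξ ∂μ := by
  rw [← integral_const_mul]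
  refine setIntegral_mono_on (integrableOn_norm_rpow_mul_closedBall hp hf) (hf.const_mul _)
    measurableSet_closedBall fun ξ hξ => ?_
  exact mul_le_mul_of_nonneg_right
    (Real.rpow_le_rpow (norm_nonneg ξ) (mem_closedBall_zero_iff.1 hξ) hp) (hf₀ ξ)

theorem rpow_mul_setIntegral_shell_le {r ρ : ℝ} (hp : 0 ≤ p) (hr : 0 ≤ r) (hf₀ : 0 ≤ f)
    (hf : IntegrableOn f (closedBall 0 ρ) μ) :
    r ^ p * ∫ ξ in closedBall 0 ρ \ closedBall 0 r, f ξ ∂μ ≤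
      ∫ ξ in closedBall 0 ρ, ‖ξ‖ ^ p * f ξ ∂μ := by
  have hfp := integrableOn_norm_rpow_mul_closedBall hp hf
  calc r ^ p * ∫ ξ in closedBall 0 ρ \ closedBall 0 r, f ξ ∂μ
      = ∫ ξ in closedBall 0 ρ \ closedBall 0 r, r ^ p * f ξ ∂μ := (integral_const_mul _ _).symm
    _ ≤ ∫ ξ in closedBall 0 ρ \ closedBall 0 r, ‖ξ‖ ^ p * f ξ ∂μ := by
      refine setIntegral_mono_on ((hf.mono_set Set.sdiff_subset).const_mul _)
        (hfp.mono_set Set.sdiff_subset)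
        (measurableSet_closedBall.diff measurableSet_closedBall) fun ξ hξ => ?_
      have hrξ : r < ‖ξ‖ := not_le.1 fun h => hξ.2 (mem_closedBall_zero_iff.2 h)
      exact mul_le_mul_of_nonneg_right (Real.rpow_le_rpow hr hrξ.le hp) (hf₀ ξ)
    _ ≤ ∫ ξ in closedBall 0 ρ, ‖ξ‖ ^ p * f ξ ∂μ :=
      setIntegral_mono_set hfp
        (.of_forall fun ξ => mul_nonneg (Real.rpow_nonneg (norm_nonneg ξ) p) (hf₀ ξ))
        Set.sdiff_subset.eventuallyLE

theorem setIntegral_norm_rpow_mul_isBigO (hp : 0 ≤ p) (hf₀ : 0 ≤ f)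
    (hf : IntegrableAtFilter f (𝓝 0) μ) :
    (fun ρ => ∫ ξ in closedBall 0 ρ, ‖ξ‖ ^ p * f ξ ∂μ) =O[𝓝[>] 0]
      fun ρ => ρ ^ p * ∫ ξ in closedBall 0 ρ, f ξ ∂μ := by
  refine IsBigO.of_norm_eventuallyLE ?_
  filter_upwards [eventually_integrableOn_closedBall hf] with ρ hfρ
  rw [Real.norm_of_nonneg
    (integral_nonneg fun ξ => mul_nonneg (Real.rpow_nonneg (norm_nonneg ξ) p) (hf₀ ξ))]
  exact setIntegral_norm_rpow_mul_closedBall_le hp hf₀ hfρ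

theorem setIntegral_closedBall_sub_mul_isBigO {q : ℝ} (hp : 0 ≤ p) (hq₀ : 0 < q) (hq₁ : q < 1)
    (hf₀ : 0 ≤ f) (hf : IntegrableAtFilter f (𝓝 0) μ) :
    (fun ρ => ∫ ξ in closedBall 0 ρ, f ξ ∂μ - ∫ ξ in closedBall 0 (q * ρ), f ξ ∂μ) =O[𝓝[>] 0]
      fun ρ => ρ ^ (-p) * ∫ ξ in closedBall 0 ρ, ‖ξ‖ ^ p * f ξ ∂μ := by
  refine IsBigO.of_bound (q ^ (-p)) ?_
  filter_upwards [eventually_integrableOn_closedBall hf, self_mem_nhdsWithin] with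
    ρ hfρ (hρ : 0 < ρ)
  have hqρ : 0 < q * ρ := mul_pos hq₀ hρ
  have ball_subset : closedBall (0 : E) (q * ρ) ⊆ closedBall 0 ρ :=
    closedBall_subset_closedBall (mul_le_of_le_one_left hρ.le hq₁.le)
  rw [← setIntegral_sdiff measurableSet_closedBall hfρ ball_subset,
    Real.norm_of_nonneg (integral_nonneg hf₀)]
  calc ∫ ξ in closedBall 0 ρ \ closedBall 0 (q * ρ), f ξ ∂μ
      ≤ (q * ρ) ^ (-p) * ∫ ξ in closedBall 0 ρ, ‖ξ‖ ^ p * f ξ ∂μ := by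
        rw [Real.rpow_neg hqρ.le, ← div_eq_inv_mul, le_div_iff₀' (Real.rpow_pos_of_pos hqρ p)]
        exact rpow_mul_setIntegral_shell_le hp hqρ.le hf₀ hfρ
    _ = q ^ (-p) * (ρ ^ (-p) * ∫ ξ in closedBall 0 ρ, ‖ξ‖ ^ p * f ξ ∂μ) := by
        rw [Real.mul_rpow hq₀.le hρ.le, mul_assoc]
    _ ≤ q ^ (-p) * ‖ρ ^ (-p) * ∫ ξ in closedBall 0 ρ, ‖ξ‖ ^ p * f ξ ∂μ‖ :=
        mul_le_mul_of_nonneg_left (Real.le_norm_self _) (Real.rpow_nonneg hq₀.le _)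

theorem setIntegral_closedBall_isLittleO_rpow_iff {a : ℝ} (ha : 0 < a) (hp : 0 ≤ p)
    (hμ : μ {0} = 0) (hf₀ : 0 ≤ f) (hf : IntegrableAtFilter f (𝓝 0) μ) :
    (fun ρ => ∫ ξ in closedBall 0 ρ, f ξ ∂μ) =o[𝓝[>] 0] (fun ρ => ρ ^ a) ↔
      (fun ρ => ∫ ξ in closedBall 0 ρ, ‖ξ‖ ^ p * f ξ ∂μ) =o[𝓝[>] 0] (fun ρ => ρ ^ (a + p)) := by
  have rpow_add (b c : ℝ) : (fun ρ : ℝ => ρ ^ b * ρ ^ c) =ᶠ[𝓝[>] 0] fun ρ => ρ ^ (b + c) := by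
    filter_upwards [self_mem_nhdsWithin] with ρ hρ using (Real.rpow_add hρ b c).symm
  constructor
  · intro h
    rw [add_comm]
    exact (setIntegral_norm_rpow_mul_isBigO hp hf₀ hf).trans_isLittleO
      (((isBigO_refl _ _).mul_isLittleO h).trans_eventuallyEq (rpow_add p a))
  · intro h
    refine isLittleO_rpow_of_sub_mul_isLittleO ha one_half_pos one_half_lt_one
      (tendsto_setIntegral_closedBall_nhdsGT_zero hμ hf) ?_
    have weighted_isLittleO := ((isBigO_refl _ _).mul_isLittleO h).trans_eventuallyEq
      (rpow_add (-p) (a + p))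
    rw [neg_add_cancel_comm_assoc] at weighted_isLittleO
    exact (setIntegral_closedBall_sub_mul_isBigO hp one_half_pos one_half_lt_one hf₀
      hf).trans_isLittleO weighted_isLittleO

/-- `f` plays the role of `|û₀|²` and `d` that of the dimension. -/
theorem decay_character_infty_iff_general {d s : ℝ} (hs : 0 ≤ s) (hμ : μ {0} = 0) (hf₀ : 0 ≤ f)
    (hf : IntegrableAtFilter f (𝓝 0) μ) :
    (∀ r : ℝ, -d / 2 < r →
      Tendsto (fun ρ : ℝ => ρ ^ (-(2 * r) - d) * ∫ ξ in closedBall 0 ρ, f ξ ∂μ)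
        (𝓝[>] 0) (𝓝 0)) ↔
    (∀ r : ℝ, -d / 2 + s < r →
      Tendsto (fun ρ : ℝ => ρ ^ (-(2 * r) - d) * ∫ ξ in closedBall 0 ρ, ‖ξ‖ ^ (2 * s) * f ξ ∂μ)
        (𝓝[>] 0) (𝓝 0)) := by
  refine (Equiv.addRight s).forall_congr fun r => ?_
  rw [Equiv.coe_addRight, add_lt_add_iff_right]
  refine forall_congr' fun hr => ?_
  have exponent_eq : 2 * (r + s) + d = 2 * r + d + 2 * s := by ring
  rw [← neg_add', ← neg_add', ← isLittleO_rpow_iff_tendsto_rpow_neg_mul,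
    ← isLittleO_rpow_iff_tendsto_rpow_neg_mul, exponent_eq]
  exact setIntegral_closedBall_isLittleO_rpow_iff (by linarith) (by linarith) hμ hf₀ hf

end BallIntegrals

theorem integrable_of_integrable_one_add_norm_sq_rpow_mul {E : Type*} [NormedAddCommGroup E]
    [MeasurableSpace E] [OpensMeasurableSpace E] {μ : Measure E} {f : E → ℝ} {s : ℝ} (hs : 0 ≤ s)
    (h : Integrable (fun ξ => (1 + ‖ξ‖ ^ 2) ^ s * f ξ) μ) : Integrable f μ :=
  integrable_of_one_le_of_integrable_mul
    (((measurable_norm.pow_const 2).const_add 1).pow_const s)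
    (fun ξ => Real.one_le_rpow (le_add_of_nonneg_right (sq_nonneg ‖ξ‖)) hs) h

/-- **`r*(u₀) = ∞` iff `r*_s(u₀) = ∞`.**
For `u₀ ∈ H^s(ℝⁿ)`, `s > 0` (encoded via Plancherel as integrability of
`(1+|ξ|²)^s |û₀(ξ)|²`), all decay indicators of `u₀` vanish as `ρ → 0⁺` if and only if
all `s`-decay indicators of `Λ^s u₀` vanish as `ρ → 0⁺`. -/
theorem decay_character_infty_iff
    (n : ℕ) (hn : 1 ≤ n) (s : ℝ) (hs : 0 < s)
    (F0 : EuclideanSpace ℝ (Fin n) → ℂ)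
    (hHs : Integrable (fun ξ : EuclideanSpace ℝ (Fin n) =>
      (1 + ‖ξ‖ ^ 2) ^ s * ‖F0 ξ‖ ^ 2)) :
    (∀ r : ℝ, -(n : ℝ) / 2 < r →
      Tendsto (fun ρ : ℝ => ρ ^ (-(2 * r) - (n : ℝ)) *
          ∫ ξ in closedBall (0 : EuclideanSpace ℝ (Fin n)) ρ, ‖F0 ξ‖ ^ 2)
        (𝓝[>] (0:ℝ)) (𝓝 0))
    ↔ (∀ r : ℝ, -(n : ℝ) / 2 + s < r →
      Tendsto (fun ρ : ℝ => ρ ^ (-(2 * r) - (n : ℝ)) *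
          ∫ ξ in closedBall (0 : EuclideanSpace ℝ (Fin n)) ρ, ‖ξ‖ ^ (2 * s) * ‖F0 ξ‖ ^ 2)
        (𝓝[>] (0:ℝ)) (𝓝 0)) := by
  have : Nonempty (Fin n) := Fin.pos_iff_nonempty.1 hn
  exact decay_character_infty_iff_general hs.le (measure_singleton 0) (fun ξ => sq_nonneg ‖F0 ξ‖)
    ((integrable_of_integrable_one_add_norm_sq_rpow_mul hs.le hHs).integrableAtFilter _)
end

section
/- Let α, ν > 0 with ν > α², and let u₀ ∈ H¹(ℝ³;ℝ³) be divergence-free. Let r* ∈ [−3/2, ∞) and assume limsup_{ρ→0⁺} ρ^{−2r*−3} ∫_{|ξ|≤ρ} |û₀(ξ)|² dξ < ∞ (no condition when r* = −3/2). Let u : [0,∞) → H¹(ℝ³;ℝ³) with u(0) = u₀ satisfy: (i) the energy inequality: t ↦ ‖u(t)‖²_{L²} + α²‖∇u(t)‖²_{L²} is locally absolutely continuous with derivative ≤ −2ν‖∇u(t)‖²_{L²} for almost every t; (ii) the Fourier-side Duhamel representation: there exist K > 0 and a measurable G with |G(ξ,τ)| ≤ K|ξ|‖u(τ)‖²_{L²}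 such that û(ξ,t) = e^{tM(ξ)} û₀(ξ) − ∫₀ᵗ e^{(t−τ)M(ξ)} G(ξ,τ) dτ for all t and almost every ξ, where M(ξ) = −ν|ξ|²/(1+α²|ξ|²). Then there exist constants C₁, C₂ > 0 such that for all t > 0, ‖u(t)‖²_{L²} + α²‖∇u(t)‖²_{L²} ≤ C₁ (C₂ + t)^{−min{3/2 + r*, 5/2}}. -/
open MeasureTheory Filter Topology Metric

/-!
Fourier splitting. Writing the dissipation over the frequencies outside a ball of radius `ρ` turns
the energy inequality into `E' ≤ -c ρ² (E - low-frequency mass)`. With `ρ² = a / (1 + t)` and `a`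
large, integrating over `[t, 2t + 1]`, an interval on which `1 + t` doubles, gives
`E(2t + 1) ≤ θ E(t) + H (1 + t)^(-q)` with `θ 2^q ≤ 1/2`, and iterating dyadically yields
`E(t) = O((1 + t)^(-q))`. The low-frequency mass is controlled through Duhamel's formula by the
decay character of the datum and by `ρ^(d+2) (∫₀ᵗ ‖u‖²)²`. So a rate `q₀` for `E`, once
integrated, gives the rate `min(p, d/2 + 1 - 2 (1 - q₀)⁺)`, where `p = d/2 + r*`. Starting
from `q₀ = 0`, three rounds `0 → 1/2 → 3/2 → d/2 + 1` suffice when `d ≥ 3`; these intermediate rates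
avoid the logarithm at `q₀ = 1`.
-/

section Scalar

open Set

/-- Polynomial decay at rate `q` on `[0, ∞)`, with the weight `1 + t` so that it is meaningful at
`t = 0`. -/
def HasDecayRate (E : ℝ → ℝ) (q : ℝ) : Prop :=
  ∃ C, ∀ t, 0 ≤ t → E t ≤ C * (1 + t) ^ (-q)

/-- The differential inequality `E' ≤ Φ` on `[0, ∞)` for a locally absolutely continuous `E`, the
derivative being encoded as an a.e. defined locally integrable density `D`. -/
def HasDerivLEAE (E Φ : ℝ → ℝ) : Prop :=
  ∃ D : ℝ → ℝ, (∀ t, 0 ≤ t → IntervalIntegrable D volume 0 t) ∧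
    (∀ t, 0 ≤ t → E t = E 0 + ∫ s in (0 : ℝ)..t, D s) ∧
    ∀ᵐ s ∂volume.restrict (Ioi (0 : ℝ)), D s ≤ Φ s

theorem HasDerivLEAE.le_add_mul {E Φ : ℝ → ℝ} (h : HasDerivLEAE E Φ) {s t B : ℝ} (hs : 0 ≤ s)
    (hst : s ≤ t) (hB : ∀ x ∈ Ioc s t, Φ x ≤ B) : E t ≤ E s + (t - s) * B := by
  obtain ⟨D, hD, hE, hDΦ⟩ := h
  have hDst : IntervalIntegrable D volume s t := (hD s hs).symm.trans (hD t (hs.trans hst))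
  have hEst : E t = E s + ∫ x in s..t, D x := by
    rw [hE t (hs.trans hst), hE s hs, add_assoc,
      intervalIntegral.integral_add_adjacent_intervals (hD s hs) hDst]
  have hDB : ∫ x in s..t, D x ≤ ∫ _ in s..t, B := by
    rw [intervalIntegral.integral_of_le hst, intervalIntegral.integral_of_le hst]
    refine integral_mono_ae hDst.1 (integrableOn_const measure_Ioc_lt_top.ne) ?_
    filter_upwards [ae_restrict_of_ae_restrict_of_subset
      (Ioc_subset_Ioi_self.trans (Ioi_subset_Ioi hs)) hDΦ, ae_restrict_mem measurableSet_Ioc]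
      with x hDx hx
    exact hDx.trans (hB x hx)
  rw [intervalIntegral.integral_const, smul_eq_mul] at hDB
  linarith

theorem HasDerivLEAE.antitoneOn {E Φ : ℝ → ℝ} (h : HasDerivLEAE E Φ) (hΦ : ∀ x, Φ x ≤ 0) :
    AntitoneOn E (Ici 0) := fun s hs t _ hst => by
  simpa using h.le_add_mul hs hst (B := 0) fun x _ => hΦ x

theorem forall_nonneg_of_doubling {P : ℝ → Prop} {T : ℝ} (hT : 0 ≤ T)
    (base : ∀ t, 0 ≤ t → 1 + t ≤ 2 * (1 + T) → P t)
    (step : ∀ t, T ≤ t → P t → P (2 * t + 1)) : ∀ t, 0 ≤ t → P t := by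
  have dyadic : ∀ (n : ℕ) t, 0 ≤ t → 1 + t ≤ 2 ^ n * (1 + T) → P t := by
    intro n
    induction n with
    | zero => exact fun t ht htn => base t ht (by linarith)
    | succ n ih =>
      intro t ht htn
      by_cases htT : 1 + t ≤ 2 * (1 + T)
      · exact base t ht htT
      · convert step ((t - 1) / 2) (by linarith) (ih _ (by linarith) ?_) using 1
        · ring
        · rw [pow_succ] at htn
          linarith
  intro t ht
  obtain ⟨n, hn⟩ := pow_unbounded_of_one_lt (1 + t) (one_lt_two (α := ℝ))
  exact dyadic n t ht (hn.le.trans (le_mul_of_one_le_right (by positivity) (by linarith)))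

theorem hasDecayRate_of_doubling {E : ℝ → ℝ} {q θ H : ℝ} (hq : 0 ≤ q) (hθ : 0 ≤ θ)
    (hθq : θ * 2 ^ q ≤ 1 / 2) (hanti : AntitoneOn E (Ici 0)) (hE0 : 0 ≤ E 0)
    (hdouble : ∀ᶠ t in atTop, E (2 * t + 1) ≤ θ * E t + H * (1 + t) ^ (-q)) :
    HasDecayRate E q := by
  obtain ⟨T, hT, hdouble⟩ := (atTop_basis' (0 : ℝ)).eventually_iff.1 hdouble
  set C := max (E 0 * (2 * (1 + T)) ^ q) (2 * (2 ^ q * H))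
  have : 0 ≤ C := (by positivity : 0 ≤ E 0 * (2 * (1 + T)) ^ q).trans (le_max_left _ _)
  refine ⟨C, forall_nonneg_of_doubling hT (fun t ht htT => ?_) fun t htT ht => ?_⟩
  · rw [Real.rpow_neg (by positivity), ← div_eq_mul_inv, le_div_iff₀ (by positivity)]
    calc E t * (1 + t) ^ q ≤ E 0 * (2 * (1 + T)) ^ q := by
          gcongr
          exact hanti self_mem_Ici ht ht
      _ ≤ C := le_max_left _ _
  · have ht0 : 0 ≤ t := hT.trans htT
    have hCH : 2 ^ q * H ≤ 1 / 2 * C := by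
      linarith [le_max_right (E 0 * (2 * (1 + T)) ^ q) (2 * (2 ^ q * H))]
    have hscale : (1 + t) ^ (-q) = 2 ^ q * (1 + (2 * t + 1)) ^ (-q) := by
      rw [show 1 + (2 * t + 1) = 2 * (1 + t) by ring, Real.mul_rpow two_pos.le (by positivity),
        ← mul_assoc, ← Real.rpow_add two_pos, add_neg_cancel, Real.rpow_zero, one_mul]
    calc E (2 * t + 1) ≤ θ * (C * (1 + t) ^ (-q)) + H * (1 + t) ^ (-q) := by
          grw [hdouble htT, ht]
      _ = (θ * 2 ^ q * C + 2 ^ q * H) * (1 + (2 * t + 1)) ^ (-q) := by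
          rw [hscale]
          ring
      _ ≤ (1 / 2 * C + 1 / 2 * C) * (1 + (2 * t + 1)) ^ (-q) := by
          grw [hθq, hCH]
      _ = C * (1 + (2 * t + 1)) ^ (-q) := by ring

theorem intervalIntegrable_one_add_rpow {t : ℝ} (ht : 0 ≤ t) (r : ℝ) :
    IntervalIntegrable (fun τ : ℝ => (1 + τ) ^ r) volume 0 t := by
  refine ContinuousOn.intervalIntegrable fun x hx => ?_
  rw [uIcc_of_le ht] at hx
  exact (ContinuousAt.rpow_const (by fun_prop) (Or.inl (by linarith [hx.1]))).continuousWithinAt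

theorem integral_one_add_rpow_neg_le {t q : ℝ} (ht : 0 ≤ t) (hq : q ≠ 1) :
    ∫ τ in (0 : ℝ)..t, (1 + τ) ^ (-q) ≤ |1 - q|⁻¹ * (1 + t) ^ max (1 - q) 0 := by
  have hne : 1 - q ≠ 0 := sub_ne_zero.2 hq.symm
  have hint : ∫ τ in (0 : ℝ)..t, (1 + τ) ^ (-q) = ((1 + t) ^ (1 - q) - 1) / (1 - q) := by
    rw [intervalIntegral.integral_comp_add_left (fun x : ℝ => x ^ (-q)) 1, integral_rpow, add_zero,
      neg_add_eq_sub, Real.one_rpow]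
    refine Or.inr ⟨fun h => hq (by linarith), ?_⟩
    rw [uIcc_of_le (by linarith)]
    exact fun h => by linarith [h.1]
  rw [hint, div_eq_inv_mul]
  rcases hne.lt_or_gt with hneg | hpos
  · have hrpow : 0 ≤ (1 + t) ^ (1 - q) := by positivity
    rw [abs_of_neg hneg, max_eq_right hneg.le, Real.rpow_zero, inv_neg, neg_mul, ← mul_neg]
    exact mul_le_mul_of_nonpos_left (by linarith) (inv_nonpos.2 hneg.le)
  · rw [abs_of_pos hpos, max_eq_left hpos.le]
    gcongr
    linarith

theorem integral_le_of_le_one_add_rpow {L : ℝ → ℝ} {C q t : ℝ} (hC : 0 ≤ C) (hq : q ≠ 1)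
    (hL : ∀ τ, 0 ≤ τ → L τ ≤ C * (1 + τ) ^ (-q)) (ht : 0 ≤ t)
    (hLint : IntervalIntegrable L volume 0 t) :
    ∫ τ in (0 : ℝ)..t, L τ ≤ C * |1 - q|⁻¹ * (1 + t) ^ max (1 - q) 0 := by
  calc ∫ τ in (0 : ℝ)..t, L τ ≤ ∫ τ in (0 : ℝ)..t, C * (1 + τ) ^ (-q) :=
        intervalIntegral.integral_mono_on ht hLint
          ((intervalIntegrable_one_add_rpow ht _).const_mul C) fun τ hτ => hL τ hτ.1
    _ = C * ∫ τ in (0 : ℝ)..t, (1 + τ) ^ (-q) := intervalIntegral.integral_const_mul _ _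
    _ ≤ C * (|1 - q|⁻¹ * (1 + t) ^ max (1 - q) 0) := by
        grw [integral_one_add_rpow_neg_le ht hq]
    _ = C * |1 - q|⁻¹ * (1 + t) ^ max (1 - q) 0 := by ring

end Scalar

section Radius

open Asymptotics

theorem tendsto_sqrt_div_one_add {a : ℝ} (ha : 0 < a) :
    Tendsto (fun t : ℝ => √(a / (1 + t))) atTop (𝓝[>] 0) := by
  refine tendsto_nhdsWithin_iff.2 ⟨?_, ?_⟩
  · rw [← Real.sqrt_zero]
    exact (tendsto_const_nhds.div_atTop (tendsto_atTop_add_const_left _ _ tendsto_id)).sqrt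
  · filter_upwards [eventually_ge_atTop 0] with t ht
    exact Real.sqrt_pos.2 (by positivity)

theorem isBigO_one_add_rpow_of_le {b c : ℝ} (hbc : b ≤ c) :
    (fun t : ℝ => (1 + t) ^ b) =O[atTop] fun t => (1 + t) ^ c := by
  refine IsBigO.of_norm_eventuallyLE ?_
  filter_upwards [eventually_ge_atTop 0] with t ht
  rw [Real.norm_of_nonneg (by positivity)]
  exact Real.rpow_le_rpow_of_exponent_le (by linarith) hbc

theorem isBigO_comp_sqrt_div_one_add {Φ : ℝ → ℝ} {a p : ℝ} (ha : 0 < a)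
    (hΦ : Φ =O[𝓝[>] 0] fun ρ => ρ ^ (2 * p)) :
    (fun t => Φ √(a / (1 + t))) =O[atTop] fun t => (1 + t) ^ (-p) := by
  refine (hΦ.comp_tendsto (tendsto_sqrt_div_one_add ha)).trans (IsBigO.of_bound (a ^ p) ?_)
  filter_upwards [eventually_ge_atTop 0] with t ht
  have hpow : √(a / (1 + t)) ^ (2 * p) = a ^ p * (1 + t) ^ (-p) := by
    rw [Real.rpow_mul (by positivity), Real.rpow_two, Real.sq_sqrt (by positivity),
      Real.div_rpow ha.le (by positivity), Real.rpow_neg (by positivity), div_eq_mul_inv]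
  rw [Function.comp_apply, hpow, norm_mul, Real.norm_of_nonneg (by positivity)]

theorem isBigO_sqrt_div_one_add_pow {a : ℝ} (ha : 0 < a) (n : ℕ) :
    (fun t : ℝ => √(a / (1 + t)) ^ n) =O[atTop] fun t => (1 + t) ^ (-(n / 2 : ℝ)) := by
  refine isBigO_comp_sqrt_div_one_add (Φ := fun ρ => ρ ^ n) ha ?_
  simpa only [mul_div_cancel₀ (n : ℝ) two_ne_zero, Real.rpow_natCast] using isBigO_refl _ _

theorem isBigO_mul_two_mul_one_add_rpow (c γ : ℝ) :
    (fun t : ℝ => c * (2 * (1 + t)) ^ γ) =O[atTop] fun t => (1 + t) ^ γ := by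
  refine (EventuallyEq.isBigO ?_).trans (isBigO_const_mul_self (c * 2 ^ γ) _ _)
  filter_upwards [eventually_ge_atTop 0] with t ht
  rw [Real.mul_rpow two_pos.le (by positivity), mul_assoc]

theorem isBigO_sqrt_div_one_add_pow_mul_sq {a q γ : ℝ} {n : ℕ} {J : ℝ → ℝ} (ha : 0 < a)
    (hJ : J =O[atTop] fun t => (1 + t) ^ γ) (hq : q ≤ n / 2 - 2 * γ) :
    (fun t => √(a / (1 + t)) ^ n * J t ^ 2) =O[atTop] fun t => (1 + t) ^ (-q) := by
  refine ((isBigO_sqrt_div_one_add_pow ha n).mul (hJ.pow 2)).trans <|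
    (EventuallyEq.isBigO ?_).trans
      (isBigO_one_add_rpow_of_le (by linarith : -(n / 2 : ℝ) + γ * 2 ≤ -q))
  filter_upwards [eventually_ge_atTop 0] with t ht
  rw [← Real.rpow_mul_natCast (by positivity), ← Real.rpow_add (by positivity), Nat.cast_two]

end Radius

section Fourier

open Asymptotics Module Set

variable {V W : Type*} [MeasurableSpace V] [NormedAddCommGroup W] {μ : Measure V} {f g : V → W}

/-- The squared norm `‖u‖²_{L²}`, for `û = f`. -/
noncomputable def fourierL2Sq (μ : Measure V) (f : V → W) : ℝ :=
  ∫ ξ, ‖f ξ‖ ^ 2 ∂μ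

theorem fourierL2Sq_nonneg : 0 ≤ fourierL2Sq μ f :=
  integral_nonneg fun _ => by positivity

variable [NormedAddCommGroup V]

/-- Membership in `H¹` of the field with Fourier transform `f`. -/
def MemFourierH1 (μ : Measure V) (f : V → W) : Prop :=
  Integrable (fun ξ => (1 + ‖ξ‖ ^ 2) * ‖f ξ‖ ^ 2) μ

/-- The squared norm `‖∇u‖²_{L²}`, for `û = f`. -/
noncomputable def fourierGradSq (μ : Measure V) (f : V → W) : ℝ :=
  ∫ ξ, ‖ξ‖ ^ 2 * ‖f ξ‖ ^ 2 ∂μ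

/-- The energy `‖u‖²_{L²} + α² ‖∇u‖²_{L²}`, for `û = f`. -/
noncomputable def voigtEnergy (μ : Measure V) (α : ℝ) (f : V → W) : ℝ :=
  ∫ ξ, (1 + α ^ 2 * ‖ξ‖ ^ 2) * ‖f ξ‖ ^ 2 ∂μ

/-- The part of `‖u‖²_{L²}` carried by the frequencies `|ξ| ≤ ρ`, for `û = f`. -/
noncomputable def lowFreqMass (μ : Measure V) (f : V → W) (ρ : ℝ) : ℝ :=
  ∫ ξ in closedBall 0 ρ, ‖f ξ‖ ^ 2 ∂μ

theorem fourierGradSq_nonneg : 0 ≤ fourierGradSq μ f :=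
  integral_nonneg fun _ => by positivity

theorem voigtEnergy_nonneg {α : ℝ} : 0 ≤ voigtEnergy μ α f :=
  integral_nonneg fun _ => by positivity

theorem lowFreqMass_nonneg {ρ : ℝ} : 0 ≤ lowFreqMass μ f ρ :=
  integral_nonneg fun _ => by positivity

theorem lowFreqMass_le_fourierL2Sq (hf : Integrable (fun ξ => ‖f ξ‖ ^ 2) μ) (ρ : ℝ) :
    lowFreqMass μ f ρ ≤ fourierL2Sq μ f :=
  setIntegral_le_integral hf (Eventually.of_forall fun _ => by positivity)

theorem isBigO_lowFreqMass_of_decayCharacter {s : ℝ} (hf : Integrable (fun ξ => ‖f ξ‖ ^ 2) μ)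
    (h : s ≠ 0 → ∃ c, ∀ᶠ ρ in 𝓝[>] 0, ρ ^ (-s) * lowFreqMass μ f ρ ≤ c) :
    lowFreqMass μ f =O[𝓝[>] 0] fun ρ => ρ ^ s := by
  rcases eq_or_ne s 0 with rfl | hs
  · refine IsBigO.of_bound (fourierL2Sq μ f) (Eventually.of_forall fun ρ => ?_)
    simpa [Real.norm_of_nonneg lowFreqMass_nonneg] using lowFreqMass_le_fourierL2Sq hf ρ
  · obtain ⟨c, hc⟩ := h hs
    refine IsBigO.of_bound c ?_
    filter_upwards [hc, self_mem_nhdsWithin] with ρ hρc (hρ : 0 < ρ)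
    rw [Real.rpow_neg hρ.le, inv_mul_le_iff₀ (by positivity), mul_comm] at hρc
    rwa [Real.norm_of_nonneg lowFreqMass_nonneg, Real.norm_of_nonneg (by positivity)]

namespace MemFourierH1

variable [OpensMeasurableSpace V]

theorem integrable_affine_mul (hf : MemFourierH1 μ f) (a b : ℝ) :
    Integrable (fun ξ => (a + b * ‖ξ‖ ^ 2) * ‖f ξ‖ ^ 2) μ := by
  have hratio : Continuous fun ξ : V => (a + b * ‖ξ‖ ^ 2) / (1 + ‖ξ‖ ^ 2) :=
    Continuous.div (by fun_prop) (by fun_prop) fun ξ => by positivity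
  refine (hf.bdd_mul (c := |a| + |b|) hratio.aestronglyMeasurable (.of_forall fun ξ => ?_)).congr
    (.of_forall fun ξ => ?_)
  · rw [norm_div, Real.norm_of_nonneg (by positivity : 0 ≤ 1 + ‖ξ‖ ^ 2),
      div_le_iff₀ (by positivity), Real.norm_eq_abs]
    calc |a + b * ‖ξ‖ ^ 2| ≤ |a| + |b| * ‖ξ‖ ^ 2 :=
          (abs_add_le a _).trans_eq (by rw [abs_mul, abs_of_nonneg (sq_nonneg ‖ξ‖)])
      _ ≤ (|a| + |b|) * (1 + ‖ξ‖ ^ 2) := by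
          nlinarith [abs_nonneg a, abs_nonneg b, sq_nonneg ‖ξ‖,
            mul_nonneg (abs_nonneg a) (sq_nonneg ‖ξ‖)]
  · simp only
    field_simp

theorem integrable_normSq (hf : MemFourierH1 μ f) : Integrable (fun ξ => ‖f ξ‖ ^ 2) μ := by
  simpa using hf.integrable_affine_mul 1 0

theorem fourierL2Sq_le_voigtEnergy (hf : MemFourierH1 μ f) (α : ℝ) :
    fourierL2Sq μ f ≤ voigtEnergy μ α f :=
  integral_mono hf.integrable_normSq (hf.integrable_affine_mul 1 (α ^ 2)) fun ξ =>
    le_mul_of_one_le_left (by positivity) (le_add_of_nonneg_right (by positivity))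

theorem sq_mul_voigtEnergy_le (hf : MemFourierH1 μ f) (α : ℝ) {ρ : ℝ} (hρ0 : 0 ≤ ρ)
    (hρ1 : ρ ≤ 1) :
    ρ ^ 2 * voigtEnergy μ α f ≤
      (1 + α ^ 2) * (fourierGradSq μ f + ρ ^ 2 * lowFreqMass μ f ρ) := by
  have hgrad : Integrable (fun ξ => ‖ξ‖ ^ 2 * ‖f ξ‖ ^ 2) μ := by
    simpa using hf.integrable_affine_mul 0 1
  have hlow : Integrable (fun ξ => ρ ^ 2 * (closedBall 0 ρ).indicator (fun ξ => ‖f ξ‖ ^ 2) ξ) μ :=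
    (hf.integrable_normSq.indicator measurableSet_closedBall).const_mul _
  rw [voigtEnergy, fourierGradSq, lowFreqMass, ← integral_indicator measurableSet_closedBall,
    ← integral_const_mul, ← integral_const_mul, ← integral_add hgrad hlow, ← integral_const_mul]
  refine integral_mono ((hf.integrable_affine_mul 1 (α ^ 2)).const_mul _)
    ((hgrad.add hlow).const_mul _) fun ξ => ?_
  rcases le_or_gt ‖ξ‖ ρ with hξ | hξ
  · have hweight : 1 + α ^ 2 * ‖ξ‖ ^ 2 ≤ 1 + α ^ 2 := by
      gcongr
      exact mul_le_of_le_one_right (sq_nonneg α) (pow_le_one₀ (norm_nonneg ξ) (hξ.trans hρ1))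
    rw [indicator_of_mem (mem_closedBall_zero_iff.2 hξ)]
    calc ρ ^ 2 * ((1 + α ^ 2 * ‖ξ‖ ^ 2) * ‖f ξ‖ ^ 2)
        ≤ ρ ^ 2 * ((1 + α ^ 2) * ‖f ξ‖ ^ 2) := by grw [hweight]
      _ = (1 + α ^ 2) * (0 + ρ ^ 2 * ‖f ξ‖ ^ 2) := by ring
      _ ≤ (1 + α ^ 2) * (‖ξ‖ ^ 2 * ‖f ξ‖ ^ 2 + ρ ^ 2 * ‖f ξ‖ ^ 2) := by
          gcongr
          positivity
  · have hweight : ρ ^ 2 * (1 + α ^ 2 * ‖ξ‖ ^ 2) ≤ (1 + α ^ 2) * ‖ξ‖ ^ 2 := by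
      have hρξ : ρ ^ 2 ≤ ‖ξ‖ ^ 2 := by gcongr
      have hρsq : ρ ^ 2 * (α ^ 2 * ‖ξ‖ ^ 2) ≤ α ^ 2 * ‖ξ‖ ^ 2 :=
        mul_le_of_le_one_left (by positivity) (pow_le_one₀ hρ0 hρ1)
      linarith
    rw [indicator_of_notMem (by simpa using hξ), mul_zero, add_zero, ← mul_assoc, ← mul_assoc]
    gcongr

end MemFourierH1

theorem lowFreqMass_le_of_norm_le [NormedSpace ℝ V] [FiniteDimensional ℝ V] [BorelSpace V]
    [μ.IsAddHaarMeasure] (hf : Integrable (fun ξ => ‖f ξ‖ ^ 2) μ)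
    (hg : Integrable (fun ξ => ‖g ξ‖ ^ 2) μ) {J ρ : ℝ} (hρ : 0 ≤ ρ)
    (hfg : ∀ᵐ ξ ∂μ, ‖f ξ‖ ≤ ‖g ξ‖ + ‖ξ‖ * J) :
    lowFreqMass μ f ρ ≤
      2 * lowFreqMass μ g ρ + 2 * μ.real (closedBall 0 1) * (ρ ^ (finrank ℝ V + 2) * J ^ 2) := by
  have hconst : IntegrableOn (fun _ : V => 2 * (ρ ^ 2 * J ^ 2)) (closedBall 0 ρ) μ :=
    integrableOn_const measure_closedBall_lt_top.ne
  calc lowFreqMass μ f ρ ≤ ∫ ξ in closedBall 0 ρ, (2 * ‖g ξ‖ ^ 2 + 2 * (ρ ^ 2 * J ^ 2)) ∂μ := by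
        refine setIntegral_mono_on_ae hf.integrableOn ((hg.integrableOn.const_mul 2).add hconst)
          measurableSet_closedBall ?_
        filter_upwards [hfg] with ξ hfgξ hξ
        have hξρ : ‖ξ‖ ≤ ρ := mem_closedBall_zero_iff.1 hξ
        calc ‖f ξ‖ ^ 2 ≤ (‖g ξ‖ + ‖ξ‖ * J) ^ 2 := by gcongr
          _ ≤ 2 * (‖g ξ‖ ^ 2 + (‖ξ‖ * J) ^ 2) := add_sq_le
          _ = 2 * ‖g ξ‖ ^ 2 + 2 * (‖ξ‖ ^ 2 * J ^ 2) := by ring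
          _ ≤ 2 * ‖g ξ‖ ^ 2 + 2 * (ρ ^ 2 * J ^ 2) := by gcongr
    _ = 2 * lowFreqMass μ g ρ +
          2 * μ.real (closedBall 0 1) * (ρ ^ (finrank ℝ V + 2) * J ^ 2) := by
        rw [integral_add (hg.integrableOn.const_mul 2) hconst, integral_const_mul,
          setIntegral_const, Measure.addHaar_real_closedBall' μ 0 hρ, smul_eq_mul, lowFreqMass]
        ring

theorem norm_le_of_duhamel [NormedSpace ℝ W] {M B t : ℝ} (hM : M ≤ 0) (ht : 0 ≤ t) {L : ℝ → ℝ}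
    (hL : IntervalIntegrable L volume 0 t) {G : ℝ → W} (hG : ∀ τ, ‖G τ‖ ≤ B * L τ) {w w₀ : W}
    (h : w = Real.exp (t * M) • w₀ - ∫ τ in (0 : ℝ)..t, Real.exp ((t - τ) * M) • G τ) :
    ‖w‖ ≤ ‖w₀‖ + B * ∫ τ in (0 : ℝ)..t, L τ := by
  have norm_exp_smul_le {s : ℝ} (hs : 0 ≤ s) (x : W) : ‖Real.exp (s * M) • x‖ ≤ ‖x‖ := by
    rw [norm_smul, Real.norm_of_nonneg (Real.exp_nonneg _)]
    exact mul_le_of_le_one_left (norm_nonneg _)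
      (Real.exp_le_one_iff.2 (mul_nonpos_of_nonneg_of_nonpos hs hM))
  rw [h, ← intervalIntegral.integral_const_mul]
  refine (norm_sub_le _ _).trans (add_le_add (norm_exp_smul_le ht w₀) ?_)
  refine intervalIntegral.norm_integral_le_of_norm_le ht (.of_forall fun τ hτ => ?_)
    (hL.const_mul B)
  exact (norm_exp_smul_le (sub_nonneg.2 hτ.2) _).trans (hG τ)

/-- The a priori estimates on `û = U` from which decay is deduced: the energy inequality, and the
pointwise bound that the Duhamel representation with datum `û₀ = U₀` provides, of use at low
frequencies. -/
structure VoigtEstimates (μ : Measure V) (α ν K : ℝ) (U₀ : V → W) (U : ℝ → V → W) : Prop where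
  integrable_init : Integrable (fun ξ => ‖U₀ ξ‖ ^ 2) μ
  memFourierH1 : ∀ t, 0 ≤ t → MemFourierH1 μ (U t)
  intervalIntegrable : ∀ t, 0 ≤ t →
    IntervalIntegrable (fun τ => fourierL2Sq μ (U τ)) volume 0 t
  energy : HasDerivLEAE (fun t => voigtEnergy μ α (U t))
    fun t => -(2 * ν) * fourierGradSq μ (U t)
  norm_le : ∀ t, 0 ≤ t → ∀ᵐ ξ ∂μ,
    ‖U t ξ‖ ≤ ‖U₀ ξ‖ + K * ‖ξ‖ * ∫ τ in (0 : ℝ)..t, fourierL2Sq μ (U τ)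

namespace VoigtEstimates

variable {α ν K : ℝ} {U₀ : V → W} {U : ℝ → V → W}

theorem of_duhamel [NormedSpace ℝ W] (hν : 0 ≤ ν) (hU₀ : Integrable (fun ξ => ‖U₀ ξ‖ ^ 2) μ)
    (hH1 : ∀ t, 0 ≤ t → MemFourierH1 μ (U t))
    (hL2 : ∀ t, 0 ≤ t → IntervalIntegrable (fun τ => fourierL2Sq μ (U τ)) volume 0 t)
    (henergy : HasDerivLEAE (fun t => voigtEnergy μ α (U t))
      fun t => -(2 * ν) * fourierGradSq μ (U t))
    {G : V → ℝ → W} (hG : ∀ ξ τ, ‖G ξ τ‖ ≤ K * ‖ξ‖ * fourierL2Sq μ (U τ))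
    (hduhamel : ∀ t, 0 ≤ t → ∀ᵐ ξ ∂μ,
      U t ξ = Real.exp (t * (-(ν * ‖ξ‖ ^ 2) / (1 + α ^ 2 * ‖ξ‖ ^ 2))) • U₀ ξ
        - ∫ τ in (0 : ℝ)..t,
            Real.exp ((t - τ) * (-(ν * ‖ξ‖ ^ 2) / (1 + α ^ 2 * ‖ξ‖ ^ 2))) • G ξ τ) :
    VoigtEstimates μ α ν K U₀ U where
  integrable_init := hU₀
  memFourierH1 := hH1
  intervalIntegrable := hL2
  energy := henergy
  norm_le t ht := (hduhamel t ht).mono fun ξ hξ =>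
    norm_le_of_duhamel (div_nonpos_of_nonpos_of_nonneg (neg_nonpos.2 (by positivity))
      (by positivity)) ht (hL2 t ht) (hG ξ) hξ

theorem antitoneOn_voigtEnergy (hU : VoigtEstimates μ α ν K U₀ U) (hν : 0 ≤ ν) :
    AntitoneOn (fun t => voigtEnergy μ α (U t)) (Ici 0) :=
  hU.energy.antitoneOn fun _ =>
    mul_nonpos_of_nonpos_of_nonneg (by linarith) fourierGradSq_nonneg

/-- The constant `a` is chosen so that the dissipation integrated over `[t, 2t + 1]` has the
prefactor `Λ`. -/
theorem voigtEnergy_doubling [OpensMeasurableSpace V] (hU : VoigtEstimates μ α ν K U₀ U)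
    (hν : 0 < ν) {Λ a t m : ℝ} (hΛ : 0 ≤ Λ) (ha : a = Λ * (1 + α ^ 2) / (2 * ν)) (ht : 0 ≤ t)
    (hat : a ≤ 1 + t) (hm : ∀ x ∈ Ioc t (2 * t + 1), lowFreqMass μ (U x) √(a / (1 + t)) ≤ m) :
    (1 + Λ) * voigtEnergy μ α (U (2 * t + 1)) ≤
      voigtEnergy μ α (U t) + Λ * ((1 + α ^ 2) * m) := by
  set E := fun t => voigtEnergy μ α (U t)
  have ha0 : 0 ≤ a := ha ▸ by positivity
  have hρ1 : √(a / (1 + t)) ≤ 1 := Real.sqrt_le_one.2 ((div_le_one (by positivity)).2 hat)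
  have hdiss : ∀ x ∈ Ioc t (2 * t + 1), -(2 * ν) * fourierGradSq μ (U x) ≤
      -(Λ / (1 + t) * (E (2 * t + 1) - (1 + α ^ 2) * m)) := by
    intro x hx
    have hx0 : 0 ≤ x := ht.trans hx.1.le
    have hmono : E (2 * t + 1) ≤ E x :=
      hU.antitoneOn_voigtEnergy hν.le hx0 (mem_Ici.2 (by positivity)) hx.2
    have hsplit : a / (1 + t) * E (2 * t + 1) ≤
        (1 + α ^ 2) * (fourierGradSq μ (U x) + a / (1 + t) * m) := by
      have := (hU.memFourierH1 x hx0).sq_mul_voigtEnergy_le α (Real.sqrt_nonneg _) hρ1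
      rw [Real.sq_sqrt (by positivity)] at this
      grw [hmono, ← hm x hx]
      exact this
    have hΛa : Λ / (1 + t) = 2 * ν / (1 + α ^ 2) * (a / (1 + t)) := by
      rw [ha]
      field_simp
    calc -(2 * ν) * fourierGradSq μ (U x)
        = -(2 * ν / (1 + α ^ 2) * ((1 + α ^ 2) * (fourierGradSq μ (U x) + a / (1 + t) * m)
            - a / (1 + t) * ((1 + α ^ 2) * m))) := by field_simp; ring
      _ ≤ -(2 * ν / (1 + α ^ 2) * (a / (1 + t) * E (2 * t + 1)
            - a / (1 + t) * ((1 + α ^ 2) * m))) := by grw [hsplit]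
      _ = -(Λ / (1 + t) * (E (2 * t + 1) - (1 + α ^ 2) * m)) := by rw [hΛa]; ring
  have hincr := hU.energy.le_add_mul ht (by linarith) hdiss
  have hlen : (2 * t + 1 - t) * -(Λ / (1 + t) * (E (2 * t + 1) - (1 + α ^ 2) * m)) =
      -(Λ * (E (2 * t + 1) - (1 + α ^ 2) * m)) := by
    field_simp
    ring
  rw [hlen] at hincr
  linarith

variable [NormedSpace ℝ V] [FiniteDimensional ℝ V] [BorelSpace V] [μ.IsAddHaarMeasure] {p : ℝ}

theorem lowFreqMass_le (hU : VoigtEstimates μ α ν K U₀ U) {C γ ρ t x : ℝ} (hγ : 0 ≤ γ)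
    (hgrowth : ∀ t, 0 ≤ t → ∫ τ in (0 : ℝ)..t, fourierL2Sq μ (U τ) ≤ C * (1 + t) ^ γ)
    (hρ : 0 ≤ ρ) (ht : 0 ≤ t) (hx : x ∈ Ioc t (2 * t + 1)) :
    lowFreqMass μ (U x) ρ ≤ 2 * lowFreqMass μ U₀ ρ + 2 * μ.real (closedBall 0 1) *
      (ρ ^ (finrank ℝ V + 2) * (K * C * (2 * (1 + t)) ^ γ) ^ 2) := by
  have hx0 : 0 ≤ x := ht.trans hx.1.le
  have hint0 : 0 ≤ ∫ τ in (0 : ℝ)..x, fourierL2Sq μ (U τ) :=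
    intervalIntegral.integral_nonneg hx0 fun _ _ => fourierL2Sq_nonneg
  have hint : ∫ τ in (0 : ℝ)..x, fourierL2Sq μ (U τ) ≤ C * (2 * (1 + t)) ^ γ := by
    have hC : 0 ≤ C := by simpa using hgrowth 0 le_rfl
    refine (hgrowth x hx0).trans ?_
    gcongr
    linarith [hx.2]
  have hnorm : ∀ᵐ ξ ∂μ,
      ‖U x ξ‖ ≤ ‖U₀ ξ‖ + ‖ξ‖ * (K * ∫ τ in (0 : ℝ)..x, fourierL2Sq μ (U τ)) := by
    simpa only [mul_assoc, mul_left_comm] using hU.norm_le x hx0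
  refine (lowFreqMass_le_of_norm_le (hU.memFourierH1 x hx0).integrable_normSq hU.integrable_init
    hρ hnorm).trans ?_
  rw [mul_assoc K, mul_pow K, mul_pow K]
  gcongr

theorem exists_lowFreqMass_le (hU : VoigtEstimates μ α ν K U₀ U) {a C q γ : ℝ} (ha : 0 < a)
    (hlow : lowFreqMass μ U₀ =O[𝓝[>] 0] fun ρ => ρ ^ (2 * p)) (hqp : q ≤ p) (hγ : 0 ≤ γ)
    (hqγ : q ≤ finrank ℝ V / 2 + 1 - 2 * γ)
    (hgrowth : ∀ t, 0 ≤ t → ∫ τ in (0 : ℝ)..t, fourierL2Sq μ (U τ) ≤ C * (1 + t) ^ γ) :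
    ∃ H, ∀ᶠ t in atTop, ∀ x ∈ Ioc t (2 * t + 1),
      lowFreqMass μ (U x) √(a / (1 + t)) ≤ H * (1 + t) ^ (-q) := by
  have hinit : (fun t => 2 * lowFreqMass μ U₀ √(a / (1 + t))) =O[atTop]
      fun t => (1 + t) ^ (-q) :=
    ((isBigO_comp_sqrt_div_one_add ha hlow).trans
      (isBigO_one_add_rpow_of_le (neg_le_neg hqp))).const_mul_left 2
  have hduhamel : (fun t => 2 * μ.real (closedBall 0 1) *
      (√(a / (1 + t)) ^ (finrank ℝ V + 2) * (K * C * (2 * (1 + t)) ^ γ) ^ 2)) =O[atTop]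
        fun t => (1 + t) ^ (-q) :=
    (isBigO_sqrt_div_one_add_pow_mul_sq ha (isBigO_mul_two_mul_one_add_rpow (K * C) γ)
      (by push_cast; linarith)).const_mul_left _
  obtain ⟨H, hH⟩ := (hinit.add hduhamel).bound
  refine ⟨H, ?_⟩
  filter_upwards [hH, eventually_ge_atTop 0] with t hHt ht x hx
  rw [Real.norm_of_nonneg (by positivity : 0 ≤ (1 + t) ^ (-q))] at hHt
  exact (hU.lowFreqMass_le hγ hgrowth (Real.sqrt_nonneg _) ht hx).trans
    ((le_abs_self _).trans hHt)

theorem hasDecayRate_of_integral_growth (hU : VoigtEstimates μ α ν K U₀ U) (hν : 0 < ν)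
    {C q γ : ℝ} (hlow : lowFreqMass μ U₀ =O[𝓝[>] 0] fun ρ => ρ ^ (2 * p)) (hq : 0 ≤ q)
    (hqp : q ≤ p) (hγ : 0 ≤ γ) (hqγ : q ≤ finrank ℝ V / 2 + 1 - 2 * γ)
    (hgrowth : ∀ t, 0 ≤ t → ∫ τ in (0 : ℝ)..t, fourierL2Sq μ (U τ) ≤ C * (1 + t) ^ γ) :
    HasDecayRate (fun t => voigtEnergy μ α (U t)) q := by
  set Λ : ℝ := 2 * 2 ^ q
  set a : ℝ := Λ * (1 + α ^ 2) / (2 * ν) with ha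
  obtain ⟨H, hH⟩ := hU.exists_lowFreqMass_le (a := a) (by positivity) hlow hqp hγ hqγ hgrowth
  have hθ : (1 + Λ)⁻¹ * 2 ^ q ≤ 1 / 2 := by
    rw [inv_mul_le_iff₀ (by positivity)]
    simp only [Λ]
    linarith
  refine hasDecayRate_of_doubling (H := (1 + Λ)⁻¹ * (Λ * ((1 + α ^ 2) * H))) hq (by positivity) hθ
    (hU.antitoneOn_voigtEnergy hν.le) voigtEnergy_nonneg ?_
  filter_upwards [hH, eventually_ge_atTop 0, eventually_ge_atTop a] with t hmass ht hat
  have := hU.voigtEnergy_doubling hν (by positivity) ha ht (by linarith) hmass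
  rw [← le_inv_mul_iff₀ (by positivity)] at this
  exact this.trans_eq (by ring)

theorem hasDecayRate_min_bootstrap (hU : VoigtEstimates μ α ν K U₀ U) (hν : 0 < ν) {q₀ q : ℝ}
    (hlow : lowFreqMass μ U₀ =O[𝓝[>] 0] fun ρ => ρ ^ (2 * p)) (hp : 0 ≤ p) (hq₀ : q₀ ≠ 1)
    (hq : 0 ≤ q) (hle : q₀ ≤ q) (hq₀q : q ≤ finrank ℝ V / 2 + 1 - 2 * max (1 - q₀) 0)
    (h : HasDecayRate (fun t => voigtEnergy μ α (U t)) (min p q₀)) :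
    HasDecayRate (fun t => voigtEnergy μ α (U t)) (min p q) := by
  rcases le_total p q₀ with hpq₀ | hq₀p
  · rwa [min_eq_left hpq₀, ← min_eq_left (hpq₀.trans hle)] at h
  · rw [min_eq_right hq₀p] at h
    obtain ⟨C, hC⟩ := h
    have hC0 : 0 ≤ C := voigtEnergy_nonneg.trans (by simpa using hC 0 le_rfl)
    refine hU.hasDecayRate_of_integral_growth hν hlow (le_min hp hq) (min_le_left _ _)
      (le_max_right _ _) ((min_le_right _ _).trans hq₀q) fun t ht =>
        integral_le_of_le_one_add_rpow hC0 hq₀ (fun τ hτ => ?_) ht (hU.intervalIntegrable t ht)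
    exact ((hU.memFourierH1 τ hτ).fourierL2Sq_le_voigtEnergy α).trans (hC τ hτ)

end VoigtEstimates

theorem NSV_decay_general [NormedSpace ℝ V] [FiniteDimensional ℝ V] [BorelSpace V]
    [μ.IsAddHaarMeasure] (hdim : 3 ≤ finrank ℝ V) {α ν K r : ℝ} (hν : 0 < ν)
    (hr : -(finrank ℝ V : ℝ) / 2 ≤ r) {U₀ : V → W} {U : ℝ → V → W}
    (hU : VoigtEstimates μ α ν K U₀ U)
    (hchar : r ≠ -(finrank ℝ V : ℝ) / 2 →
      ∃ c, ∀ᶠ ρ in 𝓝[>] 0, ρ ^ (-(2 * r) - finrank ℝ V) * lowFreqMass μ U₀ ρ ≤ c) :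
    ∃ C₁ > 0, ∃ C₂ > 0, ∀ t > 0, voigtEnergy μ α (U t) ≤
      C₁ * (C₂ + t) ^ (-min (finrank ℝ V / 2 + r) (finrank ℝ V / 2 + 1)) := by
  have hd : (3 : ℝ) ≤ finrank ℝ V := by exact_mod_cast hdim
  have hp : 0 ≤ finrank ℝ V / 2 + r := by linarith
  have hlow : lowFreqMass μ U₀ =O[𝓝[>] 0] fun ρ => ρ ^ (2 * (finrank ℝ V / 2 + r)) := by
    refine isBigO_lowFreqMass_of_decayCharacter hU.integrable_init fun hne => ?_
    rw [show -(2 * (finrank ℝ V / 2 + r)) = -(2 * r) - finrank ℝ V by ring]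
    exact hchar fun h => hne (by linarith)
  have hrate₀ : HasDecayRate (fun t => voigtEnergy μ α (U t)) (min (finrank ℝ V / 2 + r) 0) := by
    refine ⟨voigtEnergy μ α (U 0), fun t ht => ?_⟩
    simpa [min_eq_right hp] using hU.antitoneOn_voigtEnergy hν.le self_mem_Ici ht ht
  have hrate₁ := hU.hasDecayRate_min_bootstrap hν (q := 1 / 2) hlow hp (by norm_num)
    (by norm_num) (by norm_num) (by norm_num; linarith) hrate₀
  have hrate₂ := hU.hasDecayRate_min_bootstrap hν (q := 3 / 2) hlow hp (by norm_num)
    (by norm_num) (by norm_num) (by norm_num; linarith) hrate₁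
  obtain ⟨C, hC⟩ := hU.hasDecayRate_min_bootstrap hν (q := finrank ℝ V / 2 + 1) hlow hp
    (by norm_num) (by positivity) (by linarith) (by norm_num) hrate₂
  refine ⟨max C 1, by positivity, 1, one_pos, fun t ht => (hC t ht.le).trans ?_⟩
  gcongr
  exact le_max_left _ _

end Fourier

/-- **Decay of weak solutions to the Navier–Stokes–Voigt equations** (final decay rate).
Here `û₀ = F0`, `û(t) = Uhat t`, `M(ξ) = -ν|ξ|²/(1+α²|ξ|²)`, and by Plancherel
`‖u(t)‖²_{L²} + α²‖∇u(t)‖²_{L²} = ∫ (1+α²|ξ|²)‖û(ξ,t)‖² dξ`.  Hypothesis (i), the local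
absolute continuity of the energy with a.e. derivative `≤ -2ν‖∇u(t)‖²_{L²}`, is encoded
by a locally integrable a.e. derivative `D`; hypothesis (ii) is the Fourier-side Duhamel
representation with `‖G(ξ,τ)‖ ≤ K|ξ|‖u(τ)‖²_{L²}`. -/
theorem NSV_decay
    (α ν K rstar : ℝ) (hα : 0 < α) (hν : 0 < ν) (hνα : α ^ 2 < ν) (hK : 0 < K)
    (hrstar : -(3:ℝ)/2 ≤ rstar)
    (F0 : EuclideanSpace ℝ (Fin 3) → EuclideanSpace ℂ (Fin 3))
    (hH10 : Integrable (fun ξ : EuclideanSpace ℝ (Fin 3) => (1 + ‖ξ‖ ^ 2) * ‖F0 ξ‖ ^ 2))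
    (hdiv : ∀ᵐ ξ ∂(volume : Measure (EuclideanSpace ℝ (Fin 3))),
      (∑ i : Fin 3, (ξ i : ℂ) * F0 ξ i) = 0)
    (hchar : rstar ≠ -(3:ℝ)/2 → ∃ c : ℝ, ∀ᶠ ρ in 𝓝[>] (0:ℝ),
      ρ ^ (-(2 * rstar) - 3) *
        (∫ ξ in closedBall (0 : EuclideanSpace ℝ (Fin 3)) ρ, ‖F0 ξ‖ ^ 2) ≤ c)
    (Uhat : ℝ → EuclideanSpace ℝ (Fin 3) → EuclideanSpace ℂ (Fin 3))
    (hU0 : ∀ᵐ ξ ∂(volume : Measure (EuclideanSpace ℝ (Fin 3))), Uhat 0 ξ = F0 ξ)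
    (hUH1 : ∀ t : ℝ, 0 ≤ t →
      Integrable (fun ξ : EuclideanSpace ℝ (Fin 3) => (1 + ‖ξ‖ ^ 2) * ‖Uhat t ξ‖ ^ 2))
    (D : ℝ → ℝ)
    (hDint : ∀ t : ℝ, 0 ≤ t → IntervalIntegrable D volume 0 t)
    (hE : ∀ t : ℝ, 0 ≤ t →
      (∫ ξ : EuclideanSpace ℝ (Fin 3), (1 + α ^ 2 * ‖ξ‖ ^ 2) * ‖Uhat t ξ‖ ^ 2)
        = (∫ ξ : EuclideanSpace ℝ (Fin 3), (1 + α ^ 2 * ‖ξ‖ ^ 2) * ‖Uhat 0 ξ‖ ^ 2)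
          + ∫ s in (0:ℝ)..t, D s)
    (hEderiv : ∀ᵐ s ∂(volume.restrict (Set.Ioi (0:ℝ))),
      D s ≤ -(2 * ν) * ∫ ξ : EuclideanSpace ℝ (Fin 3), ‖ξ‖ ^ 2 * ‖Uhat s ξ‖ ^ 2)
    (G : EuclideanSpace ℝ (Fin 3) → ℝ → EuclideanSpace ℂ (Fin 3))
    (hGmeas : StronglyMeasurable (Function.uncurry G))
    (hGbound : ∀ ξ : EuclideanSpace ℝ (Fin 3), ∀ τ : ℝ,
      ‖G ξ τ‖ ≤ K * ‖ξ‖ * ∫ η : EuclideanSpace ℝ (Fin 3), ‖Uhat τ η‖ ^ 2)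
    (hL2loc : ∀ t : ℝ, 0 ≤ t →
      IntervalIntegrable (fun τ => ∫ η : EuclideanSpace ℝ (Fin 3), ‖Uhat τ η‖ ^ 2)
        volume 0 t)
    (hDuhamel : ∀ t : ℝ, 0 ≤ t → ∀ᵐ ξ ∂(volume : Measure (EuclideanSpace ℝ (Fin 3))),
      Uhat t ξ = Real.exp (t * (-(ν * ‖ξ‖ ^ 2) / (1 + α ^ 2 * ‖ξ‖ ^ 2))) • F0 ξ
        - ∫ τ in (0:ℝ)..t,
            Real.exp ((t - τ) * (-(ν * ‖ξ‖ ^ 2) / (1 + α ^ 2 * ‖ξ‖ ^ 2))) • G ξ τ) :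
    ∃ C₁ > (0:ℝ), ∃ C₂ > (0:ℝ), ∀ t > (0:ℝ),
      (∫ ξ : EuclideanSpace ℝ (Fin 3), (1 + α ^ 2 * ‖ξ‖ ^ 2) * ‖Uhat t ξ‖ ^ 2)
        ≤ C₁ * (C₂ + t) ^ (-(min (3/2 + rstar) (5/2))) := by
  have hU : VoigtEstimates volume α ν K F0 Uhat :=
    .of_duhamel hν.le (MemFourierH1.integrable_normSq hH10) hUH1 hL2loc ⟨D, hDint, hE, hEderiv⟩
      hGbound hDuhamel
  have hdim : (Module.finrank ℝ (EuclideanSpace ℝ (Fin 3)) : ℝ) = 3 := by simp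
  have hdecay := NSV_decay_general (r := rstar) (by simp) hν (by rwa [hdim]) hU (by rwa [hdim])
  rwa [hdim, show (3 / 2 + 1 : ℝ) = 5 / 2 by norm_num] at hdecay
end

section
/- Let n ≥ 1, α, ν > 0, and v₀ ∈ H¹(ℝⁿ). Let v(t) be the solution of the linear Navier–Stokes–Voigt equation with datum v₀, defined on the Fourier side by v̂(ξ,t) = e^{tM(ξ)} v̂₀(ξ) with M(ξ) = −ν|ξ|²/(1+α²|ξ|²). Then v(t) ∈ H¹(ℝⁿ) for all t ≥ 0 and the energy equality holds: for every t ≥ 0, ‖v(t)‖²_{L²} + α²‖∇v(t)‖²_{L²} + 2ν ∫₀ᵗ ‖∇v(s)‖²_{L²} ds = ‖v₀‖²_{L²} + α²‖∇v₀‖²_{L²}. -/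
open MeasureTheory Filter Topology Metric

/-!
On the Fourier side the energy at frequency `ξ` is `(1 + α²|ξ|²)|v̂(ξ,t)|² = e^{2tM(ξ)} E(ξ)` with
`E(ξ) = (1 + α²|ξ|²)|v̂₀(ξ)|²`, and the dissipation `2ν|ξ|²|v̂(ξ,t)|²` is minus its time derivative,
because `(1 + α²|ξ|²) M(ξ) = -ν|ξ|²`. Integrating over `[0, t]` and over `ξ` gives the equality.
At a fixed frequency the time derivative does not change sign, so its absolute value integrates to
`|e^{2tM} - 1| |E|`, and Fubini applies as soon as the energy is finite at both end times. It is,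
because `e^{2tM}` is bounded: forward in time `tM ≤ 0`, and in either direction of time
`|M| ≤ |ν|/α²` when `α ≠ 0`.
-/

section ExponentialMultiplier

variable {X G : Type*} [MeasurableSpace X] {μ : Measure X}
  [NormedAddCommGroup G] [NormedSpace ℝ G]

lemma integral_mul_exp_mul (r a b : ℝ) :
    ∫ s in a..b, r * Real.exp (s * r) = Real.exp (b * r) - Real.exp (a * r) := by
  refine intervalIntegral.integral_eq_sub_of_hasDerivAt (f := fun s => Real.exp (s * r))
    (fun s _ => ?_) ((by fun_prop : Continuous _).intervalIntegrable _ _)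
  simpa only [id, mul_one, mul_comm] using ((hasDerivAt_id s).mul_const r).exp

lemma setIntegral_uIoc_norm_mul_exp_smul (r a b : ℝ) (e : G) :
    ∫ s in Set.uIoc a b, ‖(r * Real.exp (s * r)) • e‖
      = ‖(Real.exp (b * r) - Real.exp (a * r)) • e‖ := by
  have h_nonneg : 0 ≤ ∫ s in Set.uIoc a b, Real.exp (s * r) :=
    integral_nonneg fun s => (Real.exp_pos _).le
  simp only [norm_smul, norm_mul, Real.norm_of_nonneg (Real.exp_pos _).le]
  rw [integral_mul_const, integral_const_mul, ← Real.norm_of_nonneg h_nonneg, ← norm_mul,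
    ← integral_const_mul, ← intervalIntegral.norm_integral_eq_norm_integral_uIoc,
    integral_mul_exp_mul]

lemma integrable_prod_mul_exp_smul [SFinite μ] {m : X → ℝ} {E : X → G} {t : ℝ}
    (hm : AEMeasurable m μ) (hE : Integrable E μ)
    (hEt : Integrable (fun x => Real.exp (t * m x) • E x) μ) :
    Integrable (Function.uncurry fun (s : ℝ) (x : X) => (m x * Real.exp (s * m x)) • E x)
      ((volume.restrict (Set.uIoc 0 t)).prod μ) := by
  have h_meas : AEStronglyMeasurable
      (Function.uncurry fun (s : ℝ) (x : X) => (m x * Real.exp (s * m x)) • E x)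
      ((volume.restrict (Set.uIoc 0 t)).prod μ) :=
    (hm.comp_snd.mul (measurable_fst.aemeasurable.mul hm.comp_snd).exp).aestronglyMeasurable.smul
      hE.aestronglyMeasurable.comp_snd
  refine (integrable_prod_iff' h_meas).2 ⟨Eventually.of_forall fun x => ?_, ?_⟩
  · exact intervalIntegrable_iff.1 ((by fun_prop : Continuous fun s : ℝ =>
      (m x * Real.exp (s * m x)) • E x).intervalIntegrable 0 t)
  · simp only [Function.uncurry_apply_pair, setIntegral_uIoc_norm_mul_exp_smul, zero_mul,
      Real.exp_zero, sub_smul, one_smul]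
    exact (hEt.sub hE).norm

theorem intervalIntegral_integral_mul_exp_smul [SFinite μ] [CompleteSpace G]
    {m : X → ℝ} {E : X → G} {t : ℝ} (hm : AEMeasurable m μ) (hE : Integrable E μ)
    (hEt : Integrable (fun x => Real.exp (t * m x) • E x) μ) :
    ∫ s in 0..t, ∫ x, (m x * Real.exp (s * m x)) • E x ∂μ
      = ∫ x, Real.exp (t * m x) • E x ∂μ - ∫ x, E x ∂μ := by
  rw [intervalIntegral_integral_swap (integrable_prod_mul_exp_smul hm hE hEt),
    ← integral_sub hEt hE]
  simp only [intervalIntegral.integral_smul_const, integral_mul_exp_mul, zero_mul, Real.exp_zero,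
    sub_smul, one_smul]

end ExponentialMultiplier

section NavierStokesVoigt

variable {V : Type*} [SeminormedAddCommGroup V] {α ν t : ℝ}

/-- The Fourier symbol `M(ξ) = -ν|ξ|²/(1 + α²|ξ|²)` of the linear Navier–Stokes–Voigt operator, on
an arbitrary seminormed group of frequencies. For `α = 0` it is the symbol of the heat operator. -/
noncomputable def nsvSymbol (α ν : ℝ) (ξ : V) : ℝ :=
  -(ν * ‖ξ‖ ^ 2) / (1 + α ^ 2 * ‖ξ‖ ^ 2)

lemma nsvSymbol_mul_one_add_mul_sq_norm (α ν : ℝ) (ξ : V) :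
    nsvSymbol α ν ξ * (1 + α ^ 2 * ‖ξ‖ ^ 2) = -(ν * ‖ξ‖ ^ 2) :=
  div_mul_cancel₀ _ (by positivity)

lemma mul_nsvSymbol_nonpos (hνt : 0 ≤ ν * t) (ξ : V) : t * nsvSymbol α ν ξ ≤ 0 := by
  have h_eq : t * nsvSymbol α ν ξ = -(ν * t * ‖ξ‖ ^ 2 / (1 + α ^ 2 * ‖ξ‖ ^ 2)) := by
    rw [nsvSymbol]; ring
  rw [h_eq, neg_nonpos]
  positivity

lemma abs_nsvSymbol_le (hα : α ≠ 0) (ν : ℝ) (ξ : V) : |nsvSymbol α ν ξ| ≤ |ν| / α ^ 2 := by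
  have h_pos : 0 < 1 + α ^ 2 * ‖ξ‖ ^ 2 := by positivity
  rw [nsvSymbol, abs_div, abs_neg, abs_mul, abs_of_pos h_pos, abs_of_nonneg (sq_nonneg ‖ξ‖),
    div_le_div_iff₀ h_pos (by positivity)]
  linarith [abs_nonneg ν]

lemma exists_exp_mul_nsvSymbol_le (h : 0 ≤ ν * t ∨ α ≠ 0) :
    ∃ C, ∀ ξ : V, Real.exp (2 * t * nsvSymbol α ν ξ) ≤ C := by
  rcases h with hνt | hα
  · exact ⟨1, fun ξ => Real.exp_le_one_iff.2 (by linarith [mul_nsvSymbol_nonpos (α := α) hνt ξ])⟩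
  · refine ⟨Real.exp (|2 * t| * (|ν| / α ^ 2)), fun ξ => Real.exp_le_exp.2 ?_⟩
    calc 2 * t * nsvSymbol α ν ξ ≤ |2 * t| * |nsvSymbol α ν ξ| := abs_mul (2 * t) _ ▸ le_abs_self _
      _ ≤ |2 * t| * (|ν| / α ^ 2) := by gcongr; exact abs_nsvSymbol_le hα ν ξ

variable [MeasurableSpace V] [OpensMeasurableSpace V] {μ : Measure V}

@[fun_prop]
lemma measurable_nsvSymbol (α ν : ℝ) : Measurable (nsvSymbol α ν : V → ℝ) := by
  unfold nsvSymbol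
  fun_prop

lemma integrable_exp_mul_nsvSymbol_mul {f : V → ℝ} (h : 0 ≤ ν * t ∨ α ≠ 0)
    (hf : Integrable f μ) :
    Integrable (fun ξ => Real.exp (2 * t * nsvSymbol α ν ξ) * f ξ) μ := by
  obtain ⟨C, hC⟩ := exists_exp_mul_nsvSymbol_le (V := V) h
  refine hf.bdd_mul (by fun_prop : Measurable _).aestronglyMeasurable
    (Eventually.of_forall fun ξ => ?_) (c := C)
  exact (Real.norm_of_nonneg (Real.exp_pos _).le).trans_le (hC ξ)

lemma integrable_one_add_mul_sq_norm_mul {g : V → ℝ} (α : ℝ)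
    (hg : Integrable (fun ξ => (1 + ‖ξ‖ ^ 2) * g ξ) μ) :
    Integrable (fun ξ => (1 + α ^ 2 * ‖ξ‖ ^ 2) * g ξ) μ := by
  have h_ratio : ∀ ξ : V, ‖(1 + α ^ 2 * ‖ξ‖ ^ 2) / (1 + ‖ξ‖ ^ 2)‖ ≤ 1 + α ^ 2 := by
    intro ξ
    rw [Real.norm_of_nonneg (by positivity), div_le_iff₀ (by positivity)]
    nlinarith [sq_nonneg α, sq_nonneg ‖ξ‖]
  have h_int := hg.bdd_mul (by fun_prop : Measurable _).aestronglyMeasurable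
    (Eventually.of_forall h_ratio)
  refine h_int.congr (Eventually.of_forall fun ξ => ?_)
  have h_ne : 1 + ‖ξ‖ ^ 2 ≠ 0 := by positivity
  field_simp

/-- Here `g` stands for the spectral density `|v̂₀|²`. -/
theorem nsv_energy_equality_of_integrable [SFinite μ] {g : V → ℝ}
    (h₀ : Integrable (fun ξ => (1 + α ^ 2 * ‖ξ‖ ^ 2) * g ξ) μ)
    (ht : Integrable
      (fun ξ => (1 + α ^ 2 * ‖ξ‖ ^ 2) * (Real.exp (2 * t * nsvSymbol α ν ξ) * g ξ)) μ) :
    (∫ ξ, (1 + α ^ 2 * ‖ξ‖ ^ 2) * (Real.exp (2 * t * nsvSymbol α ν ξ) * g ξ) ∂μ)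
        + 2 * ν * ∫ s in 0..t, ∫ ξ, ‖ξ‖ ^ 2 * (Real.exp (2 * s * nsvSymbol α ν ξ) * g ξ) ∂μ
      = ∫ ξ, (1 + α ^ 2 * ‖ξ‖ ^ 2) * g ξ ∂μ := by
  have h_energy : ∀ ξ : V, (1 + α ^ 2 * ‖ξ‖ ^ 2) * (Real.exp (2 * t * nsvSymbol α ν ξ) * g ξ)
      = Real.exp (t * (2 * nsvSymbol α ν ξ)) • ((1 + α ^ 2 * ‖ξ‖ ^ 2) * g ξ) := by
    intro ξ
    rw [smul_eq_mul, mul_left_comm, mul_left_comm t, mul_assoc 2]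
  have h_dissipation : ∀ (s : ℝ) (ξ : V),
      (2 * nsvSymbol α ν ξ * Real.exp (s * (2 * nsvSymbol α ν ξ)))
          • ((1 + α ^ 2 * ‖ξ‖ ^ 2) * g ξ)
        = -(2 * ν) * (‖ξ‖ ^ 2 * (Real.exp (2 * s * nsvSymbol α ν ξ) * g ξ)) := by
    intro s ξ
    rw [smul_eq_mul, mul_left_comm s, ← mul_assoc 2 s]
    linear_combination
      2 * Real.exp (2 * s * nsvSymbol α ν ξ) * g ξ * nsvSymbol_mul_one_add_mul_sq_norm α ν ξ
  simp only [h_energy] at ht ⊢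
  have h_balance := intervalIntegral_integral_mul_exp_smul
    ((measurable_nsvSymbol α ν).const_mul 2).aemeasurable h₀ ht
  simp only [h_dissipation, integral_const_mul, intervalIntegral.integral_const_mul] at h_balance
  linarith

theorem linear_NSV_energy_equality_general [SFinite μ] {g : V → ℝ}
    (h : 0 ≤ ν * t ∨ α ≠ 0) (hg : Integrable (fun ξ => (1 + ‖ξ‖ ^ 2) * g ξ) μ) :
    Integrable (fun ξ => (1 + ‖ξ‖ ^ 2) * (Real.exp (2 * t * nsvSymbol α ν ξ) * g ξ)) μ
      ∧ (∫ ξ, (1 + α ^ 2 * ‖ξ‖ ^ 2) * (Real.exp (2 * t * nsvSymbol α ν ξ) * g ξ) ∂μ)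
          + 2 * ν * ∫ s in 0..t, ∫ ξ, ‖ξ‖ ^ 2 * (Real.exp (2 * s * nsvSymbol α ν ξ) * g ξ) ∂μ
        = ∫ ξ, (1 + α ^ 2 * ‖ξ‖ ^ 2) * g ξ ∂μ := by
  have h_H1 : Integrable
      (fun ξ => (1 + ‖ξ‖ ^ 2) * (Real.exp (2 * t * nsvSymbol α ν ξ) * g ξ)) μ := by
    simpa only [mul_left_comm] using integrable_exp_mul_nsvSymbol_mul h hg
  exact ⟨h_H1, nsv_energy_equality_of_integrable (integrable_one_add_mul_sq_norm_mul α hg)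
    (integrable_one_add_mul_sq_norm_mul α h_H1)⟩

end NavierStokesVoigt

/-- **Energy equality for the linear Navier–Stokes–Voigt equation.**
For `v₀ ∈ H¹(ℝⁿ)` and `v̂(ξ,t) = e^{tM(ξ)} v̂₀(ξ)` with `M(ξ) = -ν|ξ|²/(1+α²|ξ|²)`,
the solution stays in `H¹` and
`‖v(t)‖²_{L²} + α²‖∇v(t)‖²_{L²} + 2ν ∫₀ᵗ ‖∇v(s)‖²_{L²} ds = ‖v₀‖²_{L²} + α²‖∇v₀‖²_{L²}`.
By Plancherel, all norms are expressed as weighted integrals of `e^{2sM(ξ)}|v̂₀(ξ)|²`. -/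
theorem linear_NSV_energy_equality
    (n : ℕ) (hn : 1 ≤ n) (α ν : ℝ) (hα : 0 < α) (hν : 0 < ν)
    (F0 : EuclideanSpace ℝ (Fin n) → ℂ)
    (hH1 : Integrable (fun ξ : EuclideanSpace ℝ (Fin n) => (1 + ‖ξ‖ ^ 2) * ‖F0 ξ‖ ^ 2)) :
    ∀ t : ℝ, 0 ≤ t →
      Integrable (fun ξ : EuclideanSpace ℝ (Fin n) =>
        (1 + ‖ξ‖ ^ 2) *
          (Real.exp (2 * t * (-(ν * ‖ξ‖ ^ 2) / (1 + α ^ 2 * ‖ξ‖ ^ 2))) * ‖F0 ξ‖ ^ 2))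
      ∧ (∫ ξ : EuclideanSpace ℝ (Fin n),
            (1 + α ^ 2 * ‖ξ‖ ^ 2) *
              (Real.exp (2 * t * (-(ν * ‖ξ‖ ^ 2) / (1 + α ^ 2 * ‖ξ‖ ^ 2))) * ‖F0 ξ‖ ^ 2))
          + 2 * ν * ∫ s in (0:ℝ)..t,
              ∫ ξ : EuclideanSpace ℝ (Fin n),
                ‖ξ‖ ^ 2 *
                  (Real.exp (2 * s * (-(ν * ‖ξ‖ ^ 2) / (1 + α ^ 2 * ‖ξ‖ ^ 2))) * ‖F0 ξ‖ ^ 2)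
        = ∫ ξ : EuclideanSpace ℝ (Fin n), (1 + α ^ 2 * ‖ξ‖ ^ 2) * ‖F0 ξ‖ ^ 2 := by
  intro t ht
  exact linear_NSV_energy_equality_general (Or.inl (mul_nonneg hν.le ht)) hH1
end
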